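/- arXiv:math/0609552 — 2 statements merged into one kernel-verified Lean document; each statement's English description precedes it below -/
import Mathlib

section
/- Let 𝒜 be a reduced inverse automaton over Ã, let H = L(𝒜)ρ, and let u and v be reduced words labeling paths q →v q₀ →u p in 𝒜, where p ≠ q. Suppose 𝒜 →i^{p=q} 𝓑. Then 𝒜 →e^{uv} 𝓑 and L(𝓑)ρ = ⟨H, (uv)ρ⟩. In particular, rank(L(𝓑)ρ) ≤ 1 + rank(H); and if rank(L(𝓑)ρ) = 1 + rank(H), then H is a free factor of L(𝓑)ρ and, for every basis C of H, C ∪ {(uv)ρ} is a basis of L(𝓑)ρ. -/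
open Function

/-- A letter of the symmetrized alphabet Ã: `(a, true)` stands for `a ∈ A` and
`(a, false)` for `a⁻¹ ∈ A⁻¹`. -/
abbrev Ltr (A : Type) := A × Bool

/-- Inversion of letters of Ã. -/
def Ltr.inv {A : Type} (x : Ltr A) : Ltr A := (x.1, !x.2)

/-- The inverse `u⁻¹` of a word `u` over Ã. -/
def wordInv {A : Type} (w : List (Ltr A)) : List (Ltr A) := (w.map Ltr.inv).reverse

/-- A word over Ã is reduced iff it has no factor of the form `a a⁻¹` or `a⁻¹ a`. -/
def IsReducedWord {A : Type} (w : List (Ltr A)) : Prop :=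
  ∀ (u v : List (Ltr A)) (a : A) (b : Bool), w ≠ u ++ (a, b) :: (a, !b) :: v

/-- An automaton over the symmetrized alphabet Ã, with a bundled state type `Q`,
an initial state `q0` and a set `E` of transitions. -/
structure Autom (A : Type) : Type 1 where
  Q : Type
  q0 : Q
  E : Set (Q × Ltr A × Q)

namespace Autom

variable {A : Type}

/-- Paths using only transitions in the set `T`. -/
inductive PathOn (M : Autom A) (T : Set (M.Q × Ltr A × M.Q)) :
    M.Q → List (Ltr A) → M.Q → Prop
  | nil (q : M.Q) : PathOn M T q [] q
  | cons {p q r : M.Q} {a : Ltr A} {w : List (Ltr A)} :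
      (p, a, q) ∈ T → PathOn M T q w r → PathOn M T p (a :: w) r

/-- `M.Path p u q` : the word `u` labels a path from state `p` to state `q` in `M`. -/
def Path (M : Autom A) : M.Q → List (Ltr A) → M.Q → Prop := M.PathOn M.E

/-- The language L(𝒜) of words labeling a path from `q0` to `q0`. -/
def lang (M : Autom A) : Set (List (Ltr A)) := {w | M.Path M.q0 w M.q0}

/-- The set L(𝒜)ρ of reductions (in the free group `F(A)`) of words of L(𝒜). -/
def langRho (M : Autom A) : Set (FreeGroup A) := FreeGroup.mk '' M.lang

/-- Dual automaton: `(p,a,q)` is an edge iff `(q,a⁻¹,p)` is one. -/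
def Dual (M : Autom A) : Prop := ∀ p a q, (p, a, q) ∈ M.E ↔ (q, Ltr.inv a, p) ∈ M.E

/-- Deterministic automaton. -/
def Deterministic (M : Autom A) : Prop :=
  ∀ p a q q', (p, a, q) ∈ M.E → (p, a, q') ∈ M.E → q = q'

/-- Trim automaton: every state lies on a path from `q0` to `q0`. -/
def Trim (M : Autom A) : Prop := ∀ q, ∃ u v, M.Path M.q0 u q ∧ M.Path q v M.q0

/-- Inverse automaton: deterministic, trim and dual. -/
def IsInv (M : Autom A) : Prop := M.Deterministic ∧ M.Trim ∧ M.Dual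

/-- Reduced automaton: every state lies on a path from `q0` to `q0` labeled by
a reduced word. -/
def IsRed (M : Autom A) : Prop :=
  ∀ q, ∃ u v, IsReducedWord (u ++ v) ∧ M.Path M.q0 u q ∧ M.Path q v M.q0

/-- Homomorphisms of automata. -/
def IsHom (M N : Autom A) (φ : M.Q → N.Q) : Prop :=
  φ M.q0 = N.q0 ∧ ∀ p a q, (p, a, q) ∈ M.E → (φ p, a, φ q) ∈ N.E

/-- Isomorphism of automata. -/
def Isomorphic (M N : Autom A) : Prop :=
  ∃ φ : M.Q ≃ N.Q, M.IsHom N φ ∧ N.IsHom M φ.symm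

/-- `N` is (isomorphic to) the automaton obtained from `M` by identifying the two
states `p` and `q`. -/
def IsIdentification (M : Autom A) (p q : M.Q) (N : Autom A) : Prop :=
  ∃ φ : M.Q → N.Q,
    Surjective φ ∧ φ M.q0 = N.q0 ∧
    (∀ x y, φ x = φ y ↔ x = y ∨ (x = p ∧ y = q) ∨ (x = q ∧ y = p)) ∧
    (∀ e : N.Q × Ltr A × N.Q, e ∈ N.E ↔ ∃ e' ∈ M.E, e = (φ e'.1, e'.2.1, φ e'.2.2))

/-- `N` is (isomorphic to) the automaton obtained from `M` by deleting the state `q`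
and all transitions involving it. -/
def IsDeletion (M : Autom A) (q : M.Q) (N : Autom A) : Prop :=
  ∃ φ : N.Q → M.Q,
    Injective φ ∧ Set.range φ = {x | x ≠ q} ∧ φ N.q0 = M.q0 ∧
    (∀ e : N.Q × Ltr A × N.Q, e ∈ N.E ↔ (φ e.1, e.2.1, φ e.2.2) ∈ M.E)

/-- Elementary reduction of type 1. -/
def Red1 (M N : Autom A) : Prop :=
  ∃ p q r a, p ≠ q ∧ (r, a, p) ∈ M.E ∧ (r, a, q) ∈ M.E ∧ M.IsIdentification p q N

/-- Elementary reduction of type 2. -/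
def Red2 (M N : Autom A) : Prop :=
  ∃ (p q : M.Q) (a : Ltr A), q ≠ M.q0 ∧ (p, a, q) ∈ M.E ∧ (q, Ltr.inv a, p) ∈ M.E ∧
    (∀ e ∈ M.E, e.1 = q ∨ e.2.2 = q → e = (p, a, q) ∨ e = (q, Ltr.inv a, p)) ∧
    M.IsDeletion q N

/-- `N` is (isomorphic to) the reduction `Mρ` of `M`: perform elementary reductions
of type 1 until the automaton is deterministic, then elementary reductions of type 2
until none is possible. -/
def ReductionOf (M N : Autom A) : Prop :=
  ∃ M₁, Relation.ReflTransGen Red1 M M₁ ∧ M₁.Deterministic ∧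
    Relation.ReflTransGen Red2 M₁ N ∧ ∀ N', ¬ Red2 N N'

/-- `N` is (isomorphic to) the expansion of `M` by `(p, w, q)`: a new path labeled `w`
from `p` to `q` (together with its inverse path) whose intermediate states are new. -/
def IsExpansion (M : Autom A) (p : M.Q) (w : List (Ltr A)) (q : M.Q) (N : Autom A) : Prop :=
  w ≠ [] ∧
  ∃ (φ : M.Q → N.Q) (c : Fin (w.length + 1) → N.Q),
    Injective φ ∧ φ M.q0 = N.q0 ∧ c 0 = φ p ∧ c (Fin.last w.length) = φ q ∧
    (∀ i : Fin (w.length + 1), 0 < (i : ℕ) → (i : ℕ) < w.length → c i ∉ Set.range φ) ∧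
    (∀ i j : Fin (w.length + 1), 0 < (i : ℕ) → (i : ℕ) < w.length → c i = c j → i = j) ∧
    (∀ x : N.Q, (∃ y, φ y = x) ∨ ∃ i, c i = x) ∧
    (∀ e : N.Q × Ltr A × N.Q, e ∈ N.E ↔
      ((∃ e' ∈ M.E, e = (φ e'.1, e'.2.1, φ e'.2.2)) ∨
        ∃ i : Fin w.length,
          e = (c i.castSucc, w.get i, c i.succ) ∨
          e = (c i.succ, Ltr.inv (w.get i), c i.castSucc)))

/-- `M →exp^{(p,w,q)} N` : `N` is (isomorphic to) the reduction of the expansion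
of `M` by `(p,w,q)`. -/
def ExpStep (M : Autom A) (p : M.Q) (w : List (Ltr A)) (q : M.Q) (N : Autom A) : Prop :=
  ∃ N' N'', M.IsExpansion p w q N' ∧ ReductionOf N' N'' ∧ Isomorphic N'' N

/-- `M →re^{(p,w,q)} N` : a reduced expansion, i.e. an expansion-then-reduction in which
`M` embeds in `N`. -/
def REStep (M : Autom A) (p : M.Q) (w : List (Ltr A)) (q : M.Q) (N : Autom A) : Prop :=
  M.ExpStep p w q N ∧ ∃ ψ : M.Q → N.Q, Injective ψ ∧ M.IsHom N ψ

/-- `M →e^{w} N` : an e-step, i.e. `M →exp^{(q0,w,q0)} N`. -/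
def EStep (M : Autom A) (w : List (Ltr A)) (N : Autom A) : Prop :=
  M.ExpStep M.q0 w M.q0 N

/-- `M →i^{p=q} N` : an i-step; `N` is (isomorphic to) the reduction of the automaton
obtained from `M` by identifying the distinct states `p` and `q`. -/
def IStep (M : Autom A) (p q : M.Q) (N : Autom A) : Prop :=
  p ≠ q ∧ ∃ N' N'', M.IsIdentification p q N' ∧ ReductionOf N' N'' ∧ Isomorphic N'' N

/-- i-step, allowing `p = q` (in which case nothing happens). -/
def IStep' (M : Autom A) (p q : M.Q) (N : Autom A) : Prop :=
  (p = q ∧ M.Isomorphic N) ∨ M.IStep p q N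

/-- `M →i N` : some i-step applies. -/
def IStepAny (M N : Autom A) : Prop := ∃ p q, M.IStep p q N

/-- Some reduced expansion (by a nonempty reduced word) applies. -/
def REStepAny (M N : Autom A) : Prop :=
  ∃ p w q, IsReducedWord w ∧ M.REStep p w q N

/-- `M` is (isomorphic to) `Γ_A(H)` : a reduced inverse automaton with `L(M)ρ = H`. -/
def Represents (M : Autom A) (H : Subgroup (FreeGroup A)) : Prop :=
  M.IsInv ∧ M.IsRed ∧ M.langRho = ↑H

/-- The `q0`-diameter of an automaton: the maximum over all states `q` of the minimal
length of a reduced word labeling a path from `q0` to `q`. -/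
noncomputable def diam (M : Autom A) : ℕ :=
  ⨆ q : M.Q, sInf {n | ∃ u, IsReducedWord u ∧ u.length = n ∧ M.Path M.q0 u q}

end Autom

/-- `S` is a basis of the subgroup `H`: `S` generates `H` and freely so. -/
def IsFreeBasis {G : Type} [Group G] (S : Set G) (H : Subgroup G) : Prop :=
  Subgroup.closure S = H ∧
    Injective (FreeGroup.lift (Subtype.val : S → G) : FreeGroup S →* G)

/-- `H ≤ff K` : `H` is a free factor of `K`. -/
def FreeFactor {G : Type} [Group G] (H K : Subgroup G) : Prop :=
  ∃ B C : Set G, IsFreeBasis B H ∧ IsFreeBasis C K ∧ B ⊆ C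

/-- The rank of a subgroup: the cardinality of a basis (the common value of
the cardinalities of all bases, when `H` is a finite-rank free group). -/
noncomputable def rk {G : Type} [Group G] (H : Subgroup G) : ℕ :=
  sInf {n | ∃ S : Set G, IsFreeBasis S H ∧ S.ncard = n}

/-- `L` is a graphical free factor of `K` with respect to `A`: `Γ_A(L)` embeds
in `Γ_A(K)`. -/
def GraphicalFF {A : Type} (L K : Subgroup (FreeGroup A)) : Prop :=
  L ≤ K ∧ ∃ ML MK : Autom A, ML.Represents L ∧ MK.Represents K ∧
    ∃ ψ : ML.Q → MK.Q, Injective ψ ∧ ML.IsHom MK ψ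

/-- A step (i-step or reduced expansion) from `M` to `N` of cost `c`. -/
def StepCost {A : Type} (M N : Autom A) (c : ℕ) : Prop :=
  (c = 0 ∧ Autom.IStepAny M N) ∨
  (∃ p w q, IsReducedWord w ∧ w.length = c ∧ M.REStep p w q N)

/-- The well-order `≺` on cost sequences. -/
def costLT (k l : List ℕ) : Prop :=
  k.length < l.length ∨
  (k.length = l.length ∧ k.sum < l.sum) ∨
  (k.length = l.length ∧ k.sum = l.sum ∧ List.Lex (· < ·) k l)


theorem fg_rank_le {S T : Type} [Finite T] (f : FreeGroup T →* FreeGroup S)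
    (hf : Surjective f) : Finite S ∧ Nat.card S ≤ Nat.card T := by
  classical
  let G := Multiplicative (ZMod 2)
  have hinj : Injective (fun h : S → G => (FreeGroup.lift.symm ((FreeGroup.lift h).comp f) : T → G)) := by
    intro h h' e
    have e1 := FreeGroup.lift.symm.injective e
    rw [MonoidHom.cancel_right hf] at e1
    exact FreeGroup.lift.injective e1
  have : Finite (S → G) := Finite.of_injective _ hinj
  have hS : Finite S := by
    refine Finite.of_injective (fun s : S => (Pi.mulSingle s (Multiplicative.ofAdd (1 : ZMod 2)) : S → G)) ?_
    intro s s' e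
    by_contra hne
    have := congrFun e s
    simp only [Pi.mulSingle_eq_same, Pi.mulSingle_eq_of_ne hne] at this
    exact absurd this (by decide)
  refine ⟨hS, ?_⟩
  have hc := Nat.card_le_card_of_injective _ hinj
  rw [Nat.card_fun, Nat.card_fun] at hc
  have h2 : Nat.card G = 2 := by simp [G]
  rw [h2] at hc
  exact (Nat.pow_le_pow_iff_right (by norm_num)).1 hc

theorem exists_perm_extend {X : Type} [Finite X] (R : X → X → Prop)
    (h1 : ∀ x y y', R x y → R x y' → y = y') (h2 : ∀ x x' y, R x y → R x' y → x = x') :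
    ∃ σ : Equiv.Perm X, ∀ x y, R x y → σ x = y := by
  classical
  have := Fintype.ofFinite X
  let f : {x // ∃ y, R x y} → {y // ∃ x, R x y} := fun x => ⟨x.2.choose, x.1, x.2.choose_spec⟩
  have hf : Bijective f := by
    constructor
    · intro x x' e
      have e' : x.2.choose = x'.2.choose := congrArg Subtype.val e
      have := x.2.choose_spec
      rw [e'] at this
      exact Subtype.ext (h2 _ _ _ this x'.2.choose_spec)
    · rintro ⟨y, x, h⟩
      exact ⟨⟨x, y, h⟩, Subtype.ext (h1 _ _ _ (Exists.choose_spec (⟨y, h⟩ : ∃ y, R x y)) h)⟩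
  refine ⟨(Equiv.ofBijective f hf).extendSubtype, fun x y h => ?_⟩
  rw [Equiv.extendSubtype_apply_of_mem _ x ⟨y, h⟩]
  exact h1 _ _ _ (Exists.choose_spec (⟨y, h⟩ : ∃ y, R x y)) h

theorem freeGroup_resFin {α : Type} (w : FreeGroup α) (hw : w ≠ 1) :
    ∃ (m : ℕ) (θ : FreeGroup α →* Equiv.Perm (Fin m)), θ w ≠ 1 := by
  classical
  set L := w.toWord with hL
  have hred : FreeGroup.IsReduced L := FreeGroup.isReduced_toWord
  have hne : L ≠ [] := by rwa [hL, Ne, FreeGroup.toWord_eq_nil_iff]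
  have hchain : ∀ i (hi : i + 1 < L.length), L[i].1 = L[i+1].1 → L[i].2 = L[i+1].2 := by
    intro i hi
    exact List.isChain_iff_getElem.1 hred i hi
  let R : α → Fin (L.length + 1) → Fin (L.length + 1) → Prop := fun a x y =>
    ∃ i, ∃ hi : i < L.length, (L[i] = (a, true) ∧ x.1 = i + 1 ∧ y.1 = i) ∨
      (L[i] = (a, false) ∧ x.1 = i ∧ y.1 = i + 1)
  have key : ∀ a i (hi : i < L.length) j (hj : j < L.length), L[i] = (a, true) → L[j] = (a, false) →
      j ≠ i + 1 ∧ i ≠ j + 1 := by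
    intro a i hi j hj e1 e2
    constructor
    · rintro rfl
      have := hchain i hj
      rw [e1, e2] at this; simp at this
    · rintro rfl
      have := hchain j hi
      rw [e1, e2] at this; simp at this
  have h1 : ∀ a x y y', R a x y → R a x y' → y = y' := by
    rintro a x y y' ⟨i, hi, h⟩ ⟨j, hj, h'⟩
    have k1 := key a i hi j hj
    have k2 := key a j hj i hi
    apply Fin.ext
    rcases h with ⟨e, hx, hy⟩ | ⟨e, hx, hy⟩ <;> rcases h' with ⟨e', hx', hy'⟩ | ⟨e', hx', hy'⟩
    · omega
    · have := k1 e e'; omega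
    · have := k2 e' e; omega
    · omega
  have h2 : ∀ a x x' y, R a x y → R a x' y → x = x' := by
    rintro a x x' y ⟨i, hi, h⟩ ⟨j, hj, h'⟩
    have k1 := key a i hi j hj
    have k2 := key a j hj i hi
    apply Fin.ext
    rcases h with ⟨e, hx, hy⟩ | ⟨e, hx, hy⟩ <;> rcases h' with ⟨e', hx', hy'⟩ | ⟨e', hx', hy'⟩
    · omega
    · have := k1 e e'; omega
    · have := k2 e' e; omega
    · omega
  choose σ hσ using fun a => exists_perm_extend (R a) (h1 a) (h2 a)
  refine ⟨L.length + 1, FreeGroup.lift σ, ?_⟩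
  have step : ∀ k, ∀ (hk : k ≤ L.length),
      FreeGroup.lift σ (FreeGroup.mk (L.drop (L.length - k))) (Fin.last _) =
        ⟨L.length - k, by omega⟩ := by
    intro k
    induction k with
    | zero => intro _; simp [Fin.last]
    | succ k ih =>
      intro hk
      have hlt : L.length - (k+1) < L.length := by omega
      rw [List.drop_eq_getElem_cons hlt]
      have hk' : L.length - (k+1) + 1 = L.length - k := by omega
      rw [hk', ← List.singleton_append, ← FreeGroup.mul_mk, map_mul, Equiv.Perm.mul_apply, ih (by omega)]
      rcases hx : L[L.length - (k+1)] with ⟨a, b⟩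
      cases b
      · simp only [FreeGroup.lift_mk, List.map, List.prod_cons, List.prod_nil, cond, mul_one]
        rw [Equiv.Perm.inv_eq_iff_eq]
        symm
        apply hσ
        exact ⟨_, hlt, Or.inr ⟨hx, rfl, by simp; omega⟩⟩
      · simp only [FreeGroup.lift_mk, List.map, List.prod_cons, List.prod_nil, cond, mul_one]
        apply hσ
        exact ⟨_, hlt, Or.inl ⟨hx, by simp; omega, rfl⟩⟩
  intro h
  have := step L.length le_rfl
  simp only [Nat.sub_self, List.drop_zero] at this
  have hmk : FreeGroup.mk L = w := FreeGroup.mk_toWord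
  rw [hmk, h] at this
  have := congrArg Fin.val this
  simp at this
  exact hne this

theorem freeGroup_hopf {S T : Type} [Finite T] [Finite S] (hc : Nat.card T ≤ Nat.card S)
    (f : FreeGroup T →* FreeGroup S) (hf : Surjective f) : Injective f := by
  have hc' : Nat.card T = Nat.card S := le_antisymm hc (fg_rank_le f hf).2
  obtain ⟨e⟩ : Nonempty (S ≃ T) := Finite.card_eq.1 hc'.symm
  let f' : FreeGroup T →* FreeGroup T := (FreeGroup.freeGroupCongr e).toMonoidHom.comp f
  have hf' : Surjective f' := (FreeGroup.freeGroupCongr e).surjective.comp hf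
  rw [injective_iff_map_eq_one]
  intro w hw
  by_contra hne
  obtain ⟨m, θ, hθ⟩ := freeGroup_resFin w hne
  let Φ : (T → Equiv.Perm (Fin m)) → (T → Equiv.Perm (Fin m)) :=
    fun h => FreeGroup.lift.symm ((FreeGroup.lift h).comp f')
  have hinj : Injective Φ := by
    intro h h' e
    have e1 := FreeGroup.lift.symm.injective e
    rw [MonoidHom.cancel_right hf'] at e1
    exact FreeGroup.lift.injective e1
  obtain ⟨h, hh⟩ := Finite.surjective_of_injective hinj (FreeGroup.lift.symm θ)
  have := FreeGroup.lift.symm.injective hh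
  apply hθ
  rw [← this]
  simp [f', hw]

theorem exists_freeBasis {A : Type} (K : Subgroup (FreeGroup A)) : ∃ S, IsFreeBasis S K := by
  let b := IsFreeGroup.basis K
  let ι := IsFreeGroup.Generators K
  let f : ι → FreeGroup A := fun i => (b i : FreeGroup A)
  have hfi : Injective f := fun i j h => b.injective (Subtype.ext h)
  let e : ι ≃ Set.range f := Equiv.ofInjective f hfi
  have hcomp : ∀ x : FreeGroup ι, FreeGroup.lift (Subtype.val : Set.range f → FreeGroup A)
      (FreeGroup.freeGroupCongr e x) = (K.subtype.comp b.repr.symm.toMonoidHom) x := by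
    intro x
    have : (FreeGroup.lift (Subtype.val : Set.range f → FreeGroup A)).comp
      (FreeGroup.freeGroupCongr e).toMonoidHom = (K.subtype.comp b.repr.symm.toMonoidHom) := by
      ext i
      simp [e, f]
      rfl
    exact DFunLike.congr_fun this x
  refine ⟨Set.range f, ?_, ?_⟩
  · have h1 : Subgroup.closure (Set.range f) =
        (FreeGroup.lift (Subtype.val : Set.range f → FreeGroup A)).range := by
      rw [FreeGroup.range_lift_eq_closure, Subtype.range_coe]
    rw [h1]
    ext x
    constructor
    · rintro ⟨y, rfl⟩
      obtain ⟨z, rfl⟩ := (FreeGroup.freeGroupCongr e).surjective y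
      rw [hcomp]
      exact (b.repr.symm z).2
    · intro hx
      refine ⟨FreeGroup.freeGroupCongr e (b.repr ⟨x, hx⟩), ?_⟩
      rw [hcomp]
      simp
  · intro x y hxy
    obtain ⟨x, rfl⟩ := (FreeGroup.freeGroupCongr e).surjective x
    obtain ⟨y, rfl⟩ := (FreeGroup.freeGroupCongr e).surjective y
    rw [hcomp, hcomp] at hxy
    congr 1
    apply b.repr.symm.injective
    exact Subtype.ext hxy

theorem range_lift_coe {G : Type} [Group G] (S : Set G) :
    (FreeGroup.lift (Subtype.val : S → G)).range = Subgroup.closure S := by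
  rw [FreeGroup.range_lift_eq_closure, Subtype.range_coe]

theorem freeBasis_factor {G : Type} [Group G] {S T : Set G} {K : Subgroup G} (hS : IsFreeBasis S K)
    (hT : Subgroup.closure T = K) : ∃ f : FreeGroup T →* FreeGroup S, Surjective f ∧
      ∀ x, FreeGroup.lift (Subtype.val : S → G) (f x) = FreeGroup.lift (Subtype.val : T → G) x := by
  have hmem : ∀ t : T, ∃ y, FreeGroup.lift (Subtype.val : S → G) y = t := by
    intro t
    have : (t : G) ∈ (FreeGroup.lift (Subtype.val : S → G)).range := by
      rw [range_lift_coe, hS.1, ← hT]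
      exact Subgroup.subset_closure t.2
    exact this
  choose y hy using hmem
  have hf : ∀ x, FreeGroup.lift (Subtype.val : S → G) (FreeGroup.lift y x) =
      FreeGroup.lift (Subtype.val : T → G) x := by
    intro x
    have : (FreeGroup.lift (Subtype.val : S → G)).comp (FreeGroup.lift y) =
      FreeGroup.lift (Subtype.val : T → G) := by
      ext t
      simp [hy]
    exact DFunLike.congr_fun this x
  refine ⟨FreeGroup.lift y, ?_, hf⟩
  intro z
  have : FreeGroup.lift (Subtype.val : S → G) z ∈ (FreeGroup.lift (Subtype.val : T → G)).range := by
    rw [range_lift_coe, hT, ← hS.1, ← range_lift_coe]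
    exact ⟨z, rfl⟩
  obtain ⟨x, hx⟩ := this
  exact ⟨x, hS.2 (by rw [hf, hx])⟩

theorem freeBasis_le {G : Type} [Group G] {S T : Set G} {K : Subgroup G} (hS : IsFreeBasis S K)
    (hT : Subgroup.closure T = K) (hfin : T.Finite) : S.Finite ∧ S.ncard ≤ T.ncard := by
  obtain ⟨f, hf, -⟩ := freeBasis_factor hS hT
  have := hfin.to_subtype
  obtain ⟨h1, h2⟩ := fg_rank_le f hf
  exact ⟨Set.toFinite S, by simpa using h2⟩

theorem freeBasis_hopf {G : Type} [Group G] {S T : Set G} {K : Subgroup G} (hS : IsFreeBasis S K)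
    (hT : Subgroup.closure T = K) (hfin : T.Finite) (hc : T.ncard ≤ S.ncard) : IsFreeBasis T K := by
  obtain ⟨f, hf, hff⟩ := freeBasis_factor hS hT
  have := hfin.to_subtype
  have := (freeBasis_le hS hT hfin).1.to_subtype
  refine ⟨hT, fun x y hxy => ?_⟩
  rw [← hff, ← hff] at hxy
  exact freeGroup_hopf (by simpa using hc) f hf (hS.2 hxy)

theorem rk_spec {A : Type} (K : Subgroup (FreeGroup A)) : ∃ S, IsFreeBasis S K ∧ S.ncard = rk K := by
  obtain ⟨S, hS⟩ := exists_freeBasis K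
  exact Nat.sInf_mem (s := {n | ∃ S : Set (FreeGroup A), IsFreeBasis S K ∧ S.ncard = n}) ⟨_, S, hS, rfl⟩

theorem rank_part {A : Type} (H K : Subgroup (FreeGroup A)) (g : FreeGroup A)
    (hK : K = Subgroup.closure (↑H ∪ {g}))
    (hfg : K.FG → H.FG) :
      rk K ≤ 1 + rk H ∧
      (rk K = 1 + rk H →
        FreeFactor H K ∧
        ∀ C : Set (FreeGroup A), IsFreeBasis C H → IsFreeBasis (C ∪ {g}) K) := by
  have hgen : ∀ C : Set (FreeGroup A), IsFreeBasis C H → Subgroup.closure (C ∪ {g}) = K := by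
    intro C hC
    rw [hK, Subgroup.closure_union, Subgroup.closure_union, hC.1, Subgroup.closure_eq]
  obtain ⟨S, hS, hSn⟩ := rk_spec K
  by_cases hSf : S.Finite
  · have hKfg : K.FG := ⟨hSf.toFinset, by rw [Set.Finite.coe_toFinset]; exact hS.1⟩
    obtain ⟨D, hD⟩ := hfg hKfg
    have hfinC : ∀ C, IsFreeBasis C H → C.Finite := fun C hC =>
      (freeBasis_le hC hD D.finite_toSet).1
    have hrk : ∀ C, IsFreeBasis C H → C.ncard = rk H := by
      intro C hC
      obtain ⟨C', hC', hn⟩ := rk_spec H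
      rw [← hn]
      exact le_antisymm (freeBasis_le hC hC'.1 (hfinC _ hC')).2 (freeBasis_le hC' hC.1 (hfinC _ hC)).2
    have hcard : ∀ C, IsFreeBasis C H → (C ∪ {g}).ncard ≤ 1 + rk H := by
      intro C hC
      have := Set.ncard_union_le C {g}
      rw [Set.ncard_singleton, hrk C hC] at this
      omega
    obtain ⟨C₀, hC₀, -⟩ := rk_spec H
    have hall : rk K = 1 + rk H → ∀ C : Set (FreeGroup A), IsFreeBasis C H → IsFreeBasis (C ∪ {g}) K := by
      intro he C hC
      refine freeBasis_hopf hS (hgen C hC) ((hfinC C hC).union (Set.finite_singleton g)) ?_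
      rw [hSn, he]; exact hcard C hC
    refine ⟨?_, fun he => ⟨⟨C₀, C₀ ∪ {g}, hC₀, hall he C₀ hC₀, Set.subset_union_left⟩, hall he⟩⟩
    rw [← hSn]
    exact (freeBasis_le hS (hgen C₀ hC₀) ((hfinC C₀ hC₀).union (Set.finite_singleton g))).2.trans (hcard C₀ hC₀)
  · have : rk K = 0 := by rw [← hSn]; exact Set.Infinite.ncard hSf
    rw [this]
    exact ⟨Nat.zero_le _, fun h => by omega⟩

namespace Autom

variable {A : Type}

theorem Path.nil (M : Autom A) (p : M.Q) : M.Path p [] p := PathOn.nil p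

theorem Path.cons {M : Autom A} {p q r : M.Q} {a : Ltr A} {w : List (Ltr A)}
    (h : (p, a, q) ∈ M.E) (h' : M.Path q w r) : M.Path p (a :: w) r := PathOn.cons h h'

theorem path_nil_iff {M : Autom A} {p q : M.Q} : M.Path p [] q ↔ p = q := by
  constructor
  · intro h; cases h; rfl
  · rintro rfl; exact Path.nil M p

theorem path_cons_iff {M : Autom A} {p r : M.Q} {a : Ltr A} {w : List (Ltr A)} :
    M.Path p (a :: w) r ↔ ∃ q, (p, a, q) ∈ M.E ∧ M.Path q w r := by
  constructor
  · intro h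
    cases h with
    | cons h h' => exact ⟨_, h, h'⟩
  · rintro ⟨q, h, h'⟩; exact Path.cons h h'

theorem path_append_iff {M : Autom A} {p r : M.Q} {u v : List (Ltr A)} :
    M.Path p (u ++ v) r ↔ ∃ q, M.Path p u q ∧ M.Path q v r := by
  induction u generalizing p with
  | nil => simp [path_nil_iff]
  | cons a u ih =>
    simp only [List.cons_append, path_cons_iff, ih]
    constructor
    · rintro ⟨q, h, q', h', h''⟩; exact ⟨q', ⟨q, h, h'⟩, h''⟩
    · rintro ⟨q', ⟨q, h, h'⟩, h''⟩; exact ⟨q, h, q', h', h''⟩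

theorem Path.append {M : Autom A} {p q r : M.Q} {u v : List (Ltr A)}
    (h : M.Path p u q) (h' : M.Path q v r) : M.Path p (u ++ v) r :=
  path_append_iff.2 ⟨q, h, h'⟩

theorem path_singleton_iff {M : Autom A} {p q : M.Q} {a : Ltr A} :
    M.Path p [a] q ↔ (p, a, q) ∈ M.E := by
  simp [path_cons_iff, path_nil_iff]

theorem Path.inv {M : Autom A} (hd : M.Dual) {p q : M.Q} {u : List (Ltr A)}
    (h : M.Path p u q) : M.Path q (wordInv u) p := by
  induction u generalizing p with
  | nil => rw [path_nil_iff] at h; subst h; exact Path.nil M _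
  | cons a u ih =>
    obtain ⟨r, h1, h2⟩ := path_cons_iff.1 h
    have : wordInv (a :: u) = wordInv u ++ [Ltr.inv a] := by simp [wordInv]
    rw [this]
    exact (ih h2).append (path_singleton_iff.2 ((hd _ _ _).1 h1))

theorem mk_wordInv (w : List (Ltr A)) : FreeGroup.mk (wordInv w) = (FreeGroup.mk w)⁻¹ := by
  rw [FreeGroup.inv_mk]; rfl

theorem Path.map {M N : Autom A} {φ : M.Q → N.Q} (hφ : M.IsHom N φ) {p q : M.Q}
    {u : List (Ltr A)} (h : M.Path p u q) : N.Path (φ p) u (φ q) := by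
  induction u generalizing p with
  | nil => rw [path_nil_iff] at h; subst h; exact Path.nil N _
  | cons a u ih =>
    obtain ⟨r, h1, h2⟩ := path_cons_iff.1 h
    exact Path.cons (hφ.2 _ _ _ h1) (ih h2)

theorem Path.det {M : Autom A} (hd : M.Deterministic) {p q q' : M.Q} {u : List (Ltr A)}
    (h : M.Path p u q) (h' : M.Path p u q') : q = q' := by
  induction u generalizing p with
  | nil => rw [path_nil_iff] at h h'; rw [← h, h']
  | cons a u ih =>
    obtain ⟨r, h1, h2⟩ := path_cons_iff.1 h
    obtain ⟨r', h1', h2'⟩ := path_cons_iff.1 h'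
    obtain rfl := hd _ _ _ _ h1 h1'
    exact ih h2 h2'

theorem Path.red {M : Autom A} (hd : M.Dual) (hdet : M.Deterministic) {p q : M.Q}
    {u u' : List (Ltr A)} (hr : FreeGroup.Red u u') (h : M.Path p u q) : M.Path p u' q := by
  induction hr with
  | refl => exact h
  | tail _ hs ih =>
    cases hs with
    | @not L1 L2 x b =>
      obtain ⟨r, h1, h2⟩ := path_append_iff.1 ih
      obtain ⟨s, h3, h4⟩ := path_cons_iff.1 h2
      obtain ⟨t, h5, h6⟩ := path_cons_iff.1 h4
      have : r = t := hdet _ _ _ _ ((hd _ _ _).1 h3) h5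
      subst this
      exact h1.append h6

theorem isReduced_of_isReducedWord {w : List (Ltr A)} (h : IsReducedWord w) :
    FreeGroup.IsReduced w := by
  rw [FreeGroup.isReduced_iff_not_step]
  intro L hs
  cases hs with
  | not => exact h _ _ _ _ rfl

/-- In a deterministic dual automaton a reduced word equivalent to a path label is a path label. -/
theorem Path.of_mk_eq {M : Autom A} (hd : M.Dual) (hdet : M.Deterministic) {p q : M.Q}
    {w w' : List (Ltr A)} (h : M.Path p w q) (hw' : FreeGroup.IsReduced w')
    (he : FreeGroup.mk w = FreeGroup.mk w') : M.Path p w' q := by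
  classical
  have h1 : FreeGroup.reduce w = FreeGroup.reduce w' := FreeGroup.reduce.sound he
  rw [hw'.reduce_eq] at h1
  have h2 := Path.red hd hdet (FreeGroup.reduce.red (L := w)) h
  rwa [h1] at h2

/-- The subgroup `L(M)ρ` of a dual automaton. -/
def langSub (M : Autom A) (hd : M.Dual) : Subgroup (FreeGroup A) where
  carrier := M.langRho
  one_mem' := ⟨[], Path.nil M _, rfl⟩
  mul_mem' := by
    rintro _ _ ⟨u, hu, rfl⟩ ⟨v, hv, rfl⟩
    exact ⟨u ++ v, Path.append hu hv, by rw [FreeGroup.mul_mk]⟩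
  inv_mem' := by
    rintro _ ⟨u, hu, rfl⟩
    exact ⟨wordInv u, Path.inv hd hu, mk_wordInv u⟩

theorem potential {M : Autom A} (K : Subgroup (FreeGroup A)) (τ : M.Q → FreeGroup A)
    (hτ : ∀ x a y, (x, a, y) ∈ M.E → τ x * FreeGroup.mk [a] * (τ y)⁻¹ ∈ K)
    {x y : M.Q} {w : List (Ltr A)} (h : M.Path x w y) : τ x * FreeGroup.mk w * (τ y)⁻¹ ∈ K := by
  induction w generalizing x with
  | nil =>
    rw [path_nil_iff] at h; subst h
    have : FreeGroup.mk ([] : List (Ltr A)) = 1 := rfl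
    rw [this]; simp
  | cons a w ih =>
    obtain ⟨r, h1, h2⟩ := path_cons_iff.1 h
    have := K.mul_mem (hτ _ _ _ h1) (ih h2)
    have e : FreeGroup.mk (a :: w) = FreeGroup.mk [a] * FreeGroup.mk w := by
      rw [FreeGroup.mul_mk]; rfl
    convert this using 1
    rw [e]; group

/-- Quotient maps of automata. -/
def IsQ (M N : Autom A) (φ : M.Q → N.Q) : Prop :=
  Surjective φ ∧ φ M.q0 = N.q0 ∧
    (∀ e : N.Q × Ltr A × N.Q, e ∈ N.E ↔ ∃ e' ∈ M.E, e = (φ e'.1, e'.2.1, φ e'.2.2))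

theorem IsQ.isHom {M N : Autom A} {φ : M.Q → N.Q} (h : IsQ M N φ) : M.IsHom N φ :=
  ⟨h.2.1, fun _ _ _ hp => (h.2.2 _).2 ⟨_, hp, rfl⟩⟩

theorem IsQ.edge {M N : Autom A} {φ : M.Q → N.Q} (h : IsQ M N φ) {x : N.Q} {a : Ltr A} {y : N.Q}
    (he : (x, a, y) ∈ N.E) : ∃ x' y', (x', a, y') ∈ M.E ∧ φ x' = x ∧ φ y' = y := by
  obtain ⟨⟨x', a', y'⟩, h1, h2⟩ := (h.2.2 _).1 he
  simp only [Prod.mk.injEq] at h2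
  obtain ⟨rfl, rfl, rfl⟩ := h2
  exact ⟨x', y', h1, rfl, rfl⟩

theorem IsQ.dual {M N : Autom A} {φ : M.Q → N.Q} (h : IsQ M N φ) (hd : M.Dual) : N.Dual := by
  intro x a y
  constructor
  · intro he
    obtain ⟨x', y', h1, rfl, rfl⟩ := h.edge he
    exact h.isHom.2 _ _ _ ((hd _ _ _).1 h1)
  · intro he
    obtain ⟨x', y', h1, rfl, rfl⟩ := h.edge he
    exact h.isHom.2 _ _ _ ((hd _ _ _).2 h1)

/-- Every state is accessible. -/
def Conn (M : Autom A) : Prop := ∀ x, ∃ w, M.Path M.q0 w x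

theorem IsQ.conn {M N : Autom A} {φ : M.Q → N.Q} (h : IsQ M N φ) (hd : M.Conn) : N.Conn := by
  intro y
  obtain ⟨x, rfl⟩ := h.1 y
  obtain ⟨w, hw⟩ := hd x
  exact ⟨w, h.2.1 ▸ hw.map h.isHom⟩

theorem IsQ.isRed {M N : Autom A} {φ : M.Q → N.Q} (h : IsQ M N φ) (hd : M.IsRed) : N.IsRed := by
  intro y
  obtain ⟨x, rfl⟩ := h.1 y
  obtain ⟨u, v, h1, h2, h3⟩ := hd x
  exact ⟨u, v, h1, h.2.1 ▸ h2.map h.isHom, h.2.1 ▸ h3.map h.isHom⟩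

theorem IsIdentification.isQ {M N : Autom A} {p q : M.Q} (h : M.IsIdentification p q N) :
    ∃ φ, IsQ M N φ ∧ ∀ x y, φ x = φ y ↔ x = y ∨ (x = p ∧ y = q) ∨ (x = q ∧ y = p) := by
  obtain ⟨φ, h1, h2, h3, h4⟩ := h
  exact ⟨φ, ⟨h1, h2, h4⟩, h3⟩

theorem IsIdentification.finite {M N : Autom A} {p q : M.Q} (h : M.IsIdentification p q N)
    (hN : Finite N.Q) : Finite M.Q := by
  obtain ⟨φ, hφ, hk⟩ := h.isQ
  have : (Set.univ : Set M.Q).Finite := by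
    refine Set.Finite.of_finite_fibers φ (Set.toFinite _) ?_
    intro y _
    obtain ⟨x, rfl⟩ := hφ.1 y
    refine (Set.toFinite {x, p, q}).subset ?_
    rintro z ⟨-, hz⟩
    have hz' : φ z = φ x := hz
    rcases (hk _ _).1 hz' with rfl | ⟨rfl, rfl⟩ | ⟨rfl, rfl⟩ <;> simp
  exact Set.finite_univ_iff.1 this

theorem IsIdentification.langRho {M N : Autom A} {p q : M.Q} (h : M.IsIdentification p q N)
    (hd : M.Dual) (hc : M.Conn) (H : Subgroup (FreeGroup A)) (hH : M.langRho = ↑H)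
    {u v : List (Ltr A)} (hu : M.Path M.q0 u p) (hv : M.Path q v M.q0) :
    N.langRho = ↑(Subgroup.closure (↑H ∪ {FreeGroup.mk (u ++ v)})) := by
  obtain ⟨φ, hφ, hk⟩ := h.isQ
  have hNd := hφ.dual hd
  set K := Subgroup.closure ((H : Set (FreeGroup A)) ∪ {FreeGroup.mk (u ++ v)}) with hKdef
  have hHK : H ≤ K := fun x hx => Subgroup.subset_closure (Or.inl hx)
  have hgK : FreeGroup.mk u * FreeGroup.mk v ∈ K := by
    rw [FreeGroup.mul_mk]; exact Subgroup.subset_closure (Or.inr rfl)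
  have hmemH : ∀ w, M.Path M.q0 w M.q0 → FreeGroup.mk w ∈ H := by
    intro w hw
    rw [← SetLike.mem_coe, ← hH]; exact ⟨w, hw, rfl⟩
  apply Set.Subset.antisymm
  · rintro _ ⟨w, hw, rfl⟩
    choose t ht using hc
    have htt : ∀ x a y, (x, a, y) ∈ M.E →
        FreeGroup.mk (t x) * FreeGroup.mk [a] * (FreeGroup.mk (t y))⁻¹ ∈ H := by
      intro x a y hxy
      rw [← mk_wordInv, FreeGroup.mul_mk, FreeGroup.mul_mk]
      exact hmemH _ (((ht x).append (path_singleton_iff.2 hxy)).append ((ht y).inv hd))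
    have hpqK : FreeGroup.mk (t p) * (FreeGroup.mk (t q))⁻¹ ∈ K := by
      have h1 : FreeGroup.mk (t p) * (FreeGroup.mk u)⁻¹ ∈ H := by
        rw [← mk_wordInv, FreeGroup.mul_mk]
        exact hmemH _ ((ht p).append (hu.inv hd))
      have h2 : FreeGroup.mk (t q) * FreeGroup.mk v ∈ H := by
        rw [FreeGroup.mul_mk]
        exact hmemH _ ((ht q).append hv)
      have := K.mul_mem (K.mul_mem (hHK h1) hgK) (K.inv_mem (hHK h2))
      convert this using 1; group
    have hsame : ∀ x y, φ x = φ y → FreeGroup.mk (t x) * (FreeGroup.mk (t y))⁻¹ ∈ K := by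
      intro x y hxy
      rcases (hk _ _).1 hxy with rfl | ⟨rfl, rfl⟩ | ⟨rfl, rfl⟩
      · rw [mul_inv_cancel]; exact K.one_mem
      · exact hpqK
      · have := K.inv_mem hpqK
        convert this using 1; group
    let s : N.Q → M.Q := surjInv hφ.1
    have hs : ∀ y, φ (s y) = y := surjInv_eq hφ.1
    let τ : N.Q → FreeGroup A := fun y => FreeGroup.mk (t (s y))
    have := potential (M := N) K τ ?_ hw
    · have h0 : τ N.q0 ∈ K := by
        have := hsame (s N.q0) M.q0 (by rw [hs, hφ.2.1])
        have h2 := K.mul_mem this (hHK (hmemH _ (ht M.q0)))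
        convert h2 using 1; simp only [τ]; group
      have := K.mul_mem (K.mul_mem (K.inv_mem h0) this) h0
      simpa [mul_assoc] using this
    · intro x a y hxy
      obtain ⟨x', y', h1, h2, h3⟩ := hφ.edge hxy
      have k1 := hsame (s x) x' (by rw [hs, h2])
      have k2 := hsame y' (s y) (by rw [hs, h3])
      have := K.mul_mem (K.mul_mem k1 (hHK (htt _ _ _ h1))) k2
      convert this using 1; simp only [τ]; group
  · have : K ≤ N.langSub hNd := by
      rw [hKdef, Subgroup.closure_le]
      rintro x (hx | hx)
      · rw [← hH] at hx
        obtain ⟨w, hw, rfl⟩ := hx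
        exact ⟨w, by have := Path.map hφ.isHom hw; rwa [hφ.2.1] at this, rfl⟩
      · rw [hx]
        refine ⟨u ++ v, ?_, rfl⟩
        have h1 := hu.map hφ.isHom
        have h2 := hv.map hφ.isHom
        rw [hφ.2.1] at h1 h2
        rw [(hk p q).2 (by simp)] at h1
        exact h1.append h2
    exact this

theorem Red1.langRho {M N : Autom A} (h : Red1 M N)
    (hd : M.Dual) (hc : M.Conn) (H : Subgroup (FreeGroup A)) (hH : M.langRho = ↑H) :
    N.langRho = ↑H := by
  obtain ⟨p, q, r, a, -, h1, h2, hi⟩ := h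
  obtain ⟨w, hw⟩ := hc r
  have k1 := hw.append (path_singleton_iff.2 h1)
  have k2 := (hw.append (path_singleton_iff.2 h2)).inv hd
  rw [hi.langRho hd hc H hH k1 k2, ← FreeGroup.mul_mk, mk_wordInv, mul_inv_cancel]
  congr 1
  rw [Subgroup.closure_union, Subgroup.closure_eq]
  simp

theorem Red1.isQ {M N : Autom A} (h : Red1 M N) : ∃ φ, IsQ M N φ := by
  obtain ⟨p, q, r, a, -, h1, h2, hi⟩ := h
  obtain ⟨φ, hφ, -⟩ := hi.isQ
  exact ⟨φ, hφ⟩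

theorem red1_star {M N : Autom A} (h : Relation.ReflTransGen Red1 M N)
    (hd : M.Dual) (hc : M.Conn) (hr : M.IsRed) (H : Subgroup (FreeGroup A)) (hH : M.langRho = ↑H) :
    N.Dual ∧ N.Conn ∧ N.IsRed ∧ N.langRho = ↑H ∧ (Finite N.Q → Finite M.Q) := by
  induction h with
  | refl => exact ⟨hd, hc, hr, hH, id⟩
  | tail _ hs ih =>
    obtain ⟨h1, h2, h3, h4, h5⟩ := ih
    obtain ⟨φ, hφ⟩ := hs.isQ
    refine ⟨hφ.dual h1, hφ.conn h2, hφ.isRed h3, hs.langRho h1 h2 H h4, ?_⟩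
    obtain ⟨p, q, r, a, -, -, -, hi⟩ := hs
    exact fun hf => h5 (hi.finite hf)

theorem path_last {M : Autom A} {p q : M.Q} {w : List (Ltr A)} (h : M.Path p w q) (hw : w ≠ []) :
    ∃ r a w', (r, a, q) ∈ M.E ∧ w = w' ++ [a] := by
  obtain ⟨w', a, rfl⟩ : ∃ w' a, w = w' ++ [a] :=
    ⟨w.dropLast, w.getLast hw, (List.dropLast_append_getLast hw).symm⟩
  obtain ⟨r, h1, h2⟩ := path_append_iff.1 h
  exact ⟨r, a, w', path_singleton_iff.1 h2, rfl⟩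

theorem not_red2 {M N : Autom A} (hr : M.IsRed) : ¬ Red2 M N := by
  rintro ⟨p, q, a, hq, -, -, he, -⟩
  obtain ⟨u, v, huv, hu, hv⟩ := hr q
  have hun : u ≠ [] := by
    rintro rfl; exact hq (path_nil_iff.1 hu).symm
  obtain ⟨r, b, u', h1, rfl⟩ := path_last hu hun
  cases v with
  | nil => exact hq (path_nil_iff.1 hv)
  | cons c v =>
    obtain ⟨s, h2, h3⟩ := path_cons_iff.1 hv
    have e1 := he _ h1 (Or.inr rfl)
    have e2 := he _ h2 (Or.inl rfl)
    simp only [Prod.mk.injEq] at e1 e2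
    have hpq : c = Ltr.inv b := by
      by_cases hpq : p = q
      · subst hpq
        have hback : ∀ (w : List (Ltr A)) (x : M.Q), M.Path x w p → x = p := by
          intro w
          induction w with
          | nil => intro x h; exact path_nil_iff.1 h
          | cons d w ih =>
            intro x h
            obtain ⟨y, k1, k2⟩ := path_cons_iff.1 h
            obtain rfl := ih y k2
            have e3 := he _ k1 (Or.inr rfl)
            simp only [Prod.mk.injEq] at e3
            rcases e3 with ⟨e, -⟩ | ⟨e, -⟩ <;> exact e
        exact absurd (hback _ _ hu).symm hq
      · rcases e1 with ⟨-, e, -⟩ | ⟨-, -, e⟩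
        · rcases e2 with ⟨f, -⟩ | ⟨-, f, -⟩
          · exact absurd f.symm hpq
          · rw [f, e]
        · exact absurd e.symm hpq
    exact huv u' v b.1 b.2 (by rw [hpq]; simp [Ltr.inv])

end Autom

namespace Autom

variable {A : Type}

theorem ltr_inv_inv (a : Ltr A) : Ltr.inv (Ltr.inv a) = a := by simp [Ltr.inv]

/-- The restriction of an automaton to a set of edges and their duals. -/
def restr (M : Autom A) (T : Set (M.Q × Ltr A × M.Q)) : Autom A where
  Q := M.Q
  q0 := M.q0
  E := {e | e ∈ M.E ∧ (e ∈ T ∨ (e.2.2, Ltr.inv e.2.1, e.1) ∈ T)}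

theorem restr_dual {M : Autom A} (hd : M.Dual) (T : Set (M.Q × Ltr A × M.Q)) :
    (M.restr T).Dual := by
  intro p a q
  have h1 := hd p a q
  constructor
  · rintro ⟨h, h'⟩
    refine ⟨h1.1 h, h'.symm.imp id (fun k => ?_)⟩
    change (p, Ltr.inv (Ltr.inv a), q) ∈ T
    rw [ltr_inv_inv]; exact k
  · rintro ⟨h, h'⟩
    refine ⟨h1.2 h, h'.symm.imp (fun k => ?_) id⟩
    change (p, Ltr.inv (Ltr.inv a), q) ∈ T at k
    rw [ltr_inv_inv] at k; exact k

theorem restr_det {M : Autom A} (hd : M.Deterministic) (T : Set (M.Q × Ltr A × M.Q)) :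
    (M.restr T).Deterministic := fun p a q q' h h' => hd p a q q' h.1 h'.1

theorem restr_hom {M : Autom A} (T : Set (M.Q × Ltr A × M.Q)) :
    (M.restr T).IsHom M (fun x => x) := ⟨rfl, fun _ _ _ h => h.1⟩

theorem restr_mono {M : Autom A} {T T' : Set (M.Q × Ltr A × M.Q)} (h : T ⊆ T') :
    (M.restr T).IsHom (M.restr T') (fun x => x) :=
  ⟨rfl, fun _ _ _ k => ⟨k.1, k.2.imp (fun x => h x) (fun x => h x)⟩⟩

theorem path_restr {M : Autom A} {x y : M.Q} {w : List (Ltr A)} (h : M.Path x w y) :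
    ∃ T : Set (M.Q × Ltr A × M.Q), T.Finite ∧ (M.restr T).Path x w y := by
  induction w generalizing x with
  | nil =>
    rw [path_nil_iff] at h; subst h
    exact ⟨∅, Set.finite_empty, Path.nil (M.restr ∅) x⟩
  | cons a w ih =>
    obtain ⟨r, h1, h2⟩ := path_cons_iff.1 h
    obtain ⟨T, hT, h3⟩ := ih h2
    refine ⟨insert (x, a, r) T, hT.insert _, ?_⟩
    have h4 := Path.map (M := M.restr T) (N := M.restr (insert (x, a, r) T))
      (restr_mono (Set.subset_insert (x, a, r) T)) h3
    exact Path.cons (M := M.restr (insert (x, a, r) T)) ⟨h1, Or.inl (Set.mem_insert _ _)⟩ h4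

theorem langRho_restr {M : Autom A} (S : Set (FreeGroup A)) (hS : S.Finite) (h : S ⊆ M.langRho) :
    ∃ T : Set (M.Q × Ltr A × M.Q), T.Finite ∧ S ⊆ (M.restr T).langRho := by
  have : ∀ s : S, ∃ T : Set (M.Q × Ltr A × M.Q), T.Finite ∧ (s : FreeGroup A) ∈ (M.restr T).langRho := by
    rintro ⟨s, hs⟩
    obtain ⟨w, hw, rfl⟩ := h hs
    obtain ⟨T, hT, hp⟩ := path_restr hw
    exact ⟨T, hT, w, hp, rfl⟩
  choose T hT hT' using this
  have := hS.to_subtype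
  refine ⟨⋃ s, T s, Set.finite_iUnion hT, fun s hs => ?_⟩
  obtain ⟨w, hw, he⟩ := hT' ⟨s, hs⟩
  exact ⟨w, Path.map (M := M.restr (T ⟨s, hs⟩)) (N := M.restr (⋃ s, T s)) (restr_mono (Set.subset_iUnion T ⟨s, hs⟩)) hw, he⟩

theorem finite_of_fg {N : Autom A} (hd : N.Dual) (hdet : N.Deterministic) (hr : N.IsRed)
    (K : Subgroup (FreeGroup A)) (hK : N.langRho = ↑K) (hfg : K.FG) :
    Finite N.Q ∧ ∃ B : Set (Ltr A), B.Finite ∧ ∀ w, FreeGroup.IsReduced w → FreeGroup.mk w ∈ K →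
      ∀ a ∈ w, a ∈ B := by
  obtain ⟨S, hS⟩ := hfg
  obtain ⟨T, hT, hST⟩ := langRho_restr (M := N) (S : Set (FreeGroup A)) S.finite_toSet
    (by rw [hK, ← hS]; exact Subgroup.subset_closure)
  have hRd := restr_dual hd T
  have hRdet := restr_det hdet T
  have hKT : K ≤ (N.restr T).langSub hRd := by
    rw [← hS, Subgroup.closure_le]; exact hST
  have hpath : ∀ w, FreeGroup.IsReduced w → FreeGroup.mk w ∈ K →
      (N.restr T).Path (N.restr T).q0 w (N.restr T).q0 := by
    intro w hw hwK
    obtain ⟨w', h1, h2⟩ := hKT hwK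
    exact Path.of_mk_eq hRd hRdet h1 hw h2
  constructor
  · have hfin : (insert N.q0 ((fun e => e.2.2) '' T ∪ (fun e => e.1) '' T)).Finite :=
      ((hT.image _).union (hT.image _)).insert _
    refine Set.finite_univ_iff.1 (hfin.subset ?_)
    intro x _
    obtain ⟨u, v, huv, hu, hv⟩ := hr x
    have huvK : FreeGroup.mk (u ++ v) ∈ K := by
      rw [← SetLike.mem_coe, ← hK]; exact ⟨_, hu.append hv, rfl⟩
    obtain ⟨z, h1, h2⟩ := path_append_iff.1 (hpath _ (isReduced_of_isReducedWord huv) huvK)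
    have hz : z = x := Path.det hdet (h1.map (restr_hom T)) hu
    subst hz
    by_cases hun : u = []
    · subst hun
      left
      exact (path_nil_iff.1 hu).symm
    · obtain ⟨r, a, u', h3, -⟩ := path_last h1 hun
      right
      rcases h3.2 with h | h
      · exact Or.inl ⟨_, h, rfl⟩
      · exact Or.inr ⟨_, h, rfl⟩
  · refine ⟨(fun e => e.2.1) '' T ∪ (fun e => Ltr.inv e.2.1) '' T,
      (hT.image _).union (hT.image _), ?_⟩
    intro w hw hwK a ha
    obtain ⟨w1, w2, rfl⟩ := List.append_of_mem ha
    obtain ⟨z, h1, h2⟩ := path_append_iff.1 (hpath _ hw hwK)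
    obtain ⟨z', h3, h4⟩ := path_cons_iff.1 h2
    rcases h3.2 with h | h
    · exact Or.inl ⟨_, h, rfl⟩
    · exact Or.inr ⟨_, h, ltr_inv_inv a⟩

theorem fg_of_finite {M : Autom A} (hd : M.Dual) (hdet : M.Deterministic) (hc : M.Conn)
    (H : Subgroup (FreeGroup A)) (hH : M.langRho = ↑H) (hfin : Finite M.Q)
    (B : Set (Ltr A)) (hB : B.Finite)
    (hHB : ∀ w, FreeGroup.IsReduced w → FreeGroup.mk w ∈ H → ∀ a ∈ w, a ∈ B) : H.FG := by
  classical
  choose t ht using hc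
  let f : M.Q × Ltr A × M.Q → FreeGroup A :=
    fun e => FreeGroup.mk (t e.1) * FreeGroup.mk [e.2.1] * (FreeGroup.mk (t e.2.2))⁻¹
  let E' : Set (M.Q × Ltr A × M.Q) := {e | e ∈ M.E ∧ e.2.1 ∈ B}
  have hE' : E'.Finite := by
    refine (Set.finite_univ.prod (hB.prod Set.finite_univ)).subset (t := E') ?_
    rintro ⟨x, a, y⟩ ⟨_, h⟩
    exact ⟨trivial, h, trivial⟩
  have hmemH : ∀ w, M.Path M.q0 w M.q0 → FreeGroup.mk w ∈ H := by
    intro w hw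
    rw [← SetLike.mem_coe, ← hH]; exact ⟨w, hw, rfl⟩
  have hfE : ((insert (FreeGroup.mk (t M.q0)) (f '' E'))).Finite := (hE'.image f).insert _
  refine ⟨hfE.toFinset, ?_⟩
  rw [Set.Finite.coe_toFinset]
  set G := Subgroup.closure (insert (FreeGroup.mk (t M.q0)) (f '' E')) with hG
  apply le_antisymm
  · rw [hG, Subgroup.closure_le]
    rintro x (rfl | ⟨⟨x, a, y⟩, ⟨h, -⟩, rfl⟩)
    · exact hmemH _ (ht _)
    · change FreeGroup.mk (t x) * FreeGroup.mk [a] * (FreeGroup.mk (t y))⁻¹ ∈ H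
      rw [← mk_wordInv, FreeGroup.mul_mk, FreeGroup.mul_mk]
      exact hmemH _ (((ht x).append (path_singleton_iff.2 h)).append ((ht y).inv hd))
  · have h0 : FreeGroup.mk (t M.q0) ∈ G := Subgroup.subset_closure (Or.inl rfl)
    have hpath : ∀ (w : List (Ltr A)) (x : M.Q), (∀ a ∈ w, a ∈ B) → M.Path x w M.q0 →
        FreeGroup.mk (t x) * FreeGroup.mk w ∈ G := by
      intro w
      induction w with
      | nil =>
        intro x _ h
        rw [path_nil_iff] at h; subst h
        have : FreeGroup.mk ([] : List (Ltr A)) = 1 := rfl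
        rw [this, mul_one]; exact h0
      | cons a w ih =>
        intro x hw h
        obtain ⟨r, h1, h2⟩ := path_cons_iff.1 h
        have k := ih r (fun b hb => hw b (List.mem_cons_of_mem _ hb)) h2
        have k1 : f (x, a, r) ∈ G :=
          Subgroup.subset_closure (Or.inr ⟨_, ⟨h1, hw a List.mem_cons_self⟩, rfl⟩)
        have e : FreeGroup.mk (a :: w) = FreeGroup.mk [a] * FreeGroup.mk w := by
          rw [FreeGroup.mul_mk]; rfl
        have := G.mul_mem k1 k
        convert this using 1
        simp only [f]
        rw [e]; group
    intro g hg
    have hg' := hg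
    rw [← SetLike.mem_coe, ← hH] at hg'
    obtain ⟨w, hw, hwg⟩ := hg'
    have hred : FreeGroup.IsReduced g.toWord := FreeGroup.isReduced_toWord
    have hp : M.Path M.q0 g.toWord M.q0 :=
      Path.of_mk_eq hd hdet hw hred (by rw [FreeGroup.mk_toWord, hwg])
    have := hpath _ _ (hHB _ hred (by rwa [FreeGroup.mk_toWord])) hp
    rw [FreeGroup.mk_toWord] at this
    have := G.mul_mem (G.inv_mem h0) this
    convert this using 1; group

end Autom

namespace Autom

variable {A : Type}

theorem IsQ.refl (M : Autom A) : IsQ M M id :=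
  ⟨surjective_id, rfl, fun e => ⟨fun h => ⟨e, h, rfl⟩, by rintro ⟨e', h, rfl⟩; exact h⟩⟩

theorem IsQ.comp {M N P : Autom A} {f : M.Q → N.Q} {g : N.Q → P.Q} (hf : IsQ M N f)
    (hg : IsQ N P g) : IsQ M P (g ∘ f) := by
  refine ⟨hg.1.comp hf.1, by simp [hf.2.1, hg.2.1], fun e => ⟨fun h => ?_, ?_⟩⟩
  · obtain ⟨x, a, y⟩ := e
    obtain ⟨x', y', h', rfl, rfl⟩ := hg.edge h
    obtain ⟨x'', y'', h'', rfl, rfl⟩ := hf.edge h'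
    exact ⟨_, h'', rfl⟩
  · rintro ⟨⟨x, a, y⟩, h, rfl⟩
    exact hg.isHom.2 _ _ _ (hf.isHom.2 _ _ _ h)

theorem isomorphic_of_isQ {X M N : Autom A} {f : X.Q → M.Q} {g : X.Q → N.Q} (hf : IsQ X M f)
    (hg : IsQ X N g) (h : ∀ x y, f x = f y ↔ g x = g y) : Isomorphic M N := by
  have hs := surjInv_eq hf.1
  have hs' := surjInv_eq hg.1
  let φ : M.Q ≃ N.Q :=
    { toFun := fun y => g (surjInv hf.1 y)
      invFun := fun y => f (surjInv hg.1 y)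
      left_inv := fun y => by
        rw [← hs y, h, hs', hs]
      right_inv := fun y => by
        rw [← hs' y, ← h, hs, hs'] }
  have k1 : ∀ x, φ (f x) = g x := fun x => by
    change g (surjInv hf.1 (f x)) = g x
    rw [← h, hs]
  have k2 : ∀ x, φ.symm (g x) = f x := fun x => by
    change f (surjInv hg.1 (g x)) = f x
    rw [h, hs']
  refine ⟨φ, ⟨?_, ?_⟩, ⟨?_, ?_⟩⟩
  · rw [← hf.2.1, k1, hg.2.1]
  · intro p a q hp
    obtain ⟨x, y, h', rfl, rfl⟩ := hf.edge hp
    rw [k1, k1]; exact hg.isHom.2 _ _ _ h'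
  · rw [← hg.2.1, k2, hf.2.1]
  · intro p a q hp
    obtain ⟨x, y, h', rfl, rfl⟩ := hg.edge hp
    rw [k2, k2]; exact hf.isHom.2 _ _ _ h'

theorem Isomorphic.isQ {M N : Autom A} (h : Isomorphic M N) : ∃ φ : M.Q ≃ N.Q, IsQ M N φ := by
  obtain ⟨φ, h1, h2⟩ := h
  refine ⟨φ, φ.surjective, h1.1, fun e => ⟨fun h => ?_, ?_⟩⟩
  · obtain ⟨x, a, y⟩ := e
    exact ⟨_, h2.2 _ _ _ h, by simp⟩
  · rintro ⟨e', h, rfl⟩; exact h1.2 _ _ _ h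

theorem Isomorphic.symm {M N : Autom A} (h : Isomorphic M N) : Isomorphic N M := by
  obtain ⟨φ, h1, h2⟩ := h
  exact ⟨φ.symm, h2, h1⟩

theorem Isomorphic.trans {M N P : Autom A} (h : Isomorphic M N) (h' : Isomorphic N P) :
    Isomorphic M P := by
  obtain ⟨φ, h1, h2⟩ := h
  obtain ⟨φ', h1', h2'⟩ := h'
  refine ⟨φ.trans φ', ⟨?_, fun p a q k => h1'.2 _ _ _ (h1.2 _ _ _ k)⟩,
    ⟨?_, fun p a q k => h2.2 _ _ _ (h2'.2 _ _ _ k)⟩⟩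
  · simp [h1.1, h1'.1]
  · simp [h2.1, h2'.1]

theorem Isomorphic.det {M N : Autom A} (h : Isomorphic M N) (hd : N.Deterministic) :
    M.Deterministic := by
  obtain ⟨φ, h1, h2⟩ := h
  intro p a q q' k k'
  exact φ.injective (hd _ _ _ _ (h1.2 _ _ _ k) (h1.2 _ _ _ k'))

theorem Isomorphic.langRho {M N : Autom A} (h : Isomorphic M N) : M.langRho = N.langRho := by
  obtain ⟨φ, h1, h2⟩ := h
  apply Set.Subset.antisymm
  · rintro _ ⟨w, hw, rfl⟩
    refine ⟨w, ?_, rfl⟩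
    have := Path.map h1 hw
    rwa [h1.1] at this
  · rintro _ ⟨w, hw, rfl⟩
    refine ⟨w, ?_, rfl⟩
    have := Path.map h2 hw
    rwa [h2.1] at this

theorem Isomorphic.red1 {M N P : Autom A} (h : Isomorphic M N) (hr : Red1 N P) : Red1 M P := by
  obtain ⟨φ, hφ⟩ := h.isQ
  obtain ⟨ψ, hψ⟩ := h.symm.isQ
  obtain ⟨p, q, r, a, hne, h1, h2, f, f1, f2, f3, f4⟩ := hr
  have hf : IsQ N P f := ⟨f1, f2, f4⟩
  obtain ⟨θ, k1, k2⟩ := h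
  have hθ : IsQ M N θ := by
    refine ⟨θ.surjective, k1.1, fun e => ⟨fun h => ?_, ?_⟩⟩
    · obtain ⟨x, a, y⟩ := e
      exact ⟨_, k2.2 _ _ _ h, by simp⟩
    · rintro ⟨e', h, rfl⟩; exact k1.2 _ _ _ h
  have hc := hθ.comp hf
  refine ⟨θ.symm p, θ.symm q, θ.symm r, a, fun e => hne (θ.symm.injective e), k2.2 _ _ _ h1,
    k2.2 _ _ _ h2, f ∘ θ, hc.1, hc.2.1, ?_, hc.2.2⟩
  intro x y
  rw [comp_apply, comp_apply, f3, θ.injective.eq_iff]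
  simp only [Equiv.eq_symm_apply]

theorem Isomorphic.red1_star {M N P : Autom A} (h : Isomorphic M N)
    (hr : Relation.ReflTransGen Red1 N P) :
    ∃ Z, Relation.ReflTransGen Red1 M Z ∧ Isomorphic Z P := by
  rcases Relation.ReflTransGen.cases_head hr with rfl | ⟨N₁, h1, h2⟩
  · exact ⟨M, Relation.ReflTransGen.refl, h⟩
  · exact ⟨P, Relation.ReflTransGen.head (h.red1 h1) h2, Equiv.refl _, ⟨rfl, fun _ _ _ h => h⟩,
      ⟨rfl, fun _ _ _ h => h⟩⟩

/-- The relation identifying two points. -/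
def pairSetoid {Q : Type} (p q : Q) : Setoid Q where
  r x y := x = y ∨ (x = p ∧ y = q) ∨ (x = q ∧ y = p)
  iseqv := ⟨fun _ => Or.inl rfl, by rintro x y (rfl | ⟨rfl, rfl⟩ | ⟨rfl, rfl⟩) <;> simp,
    by rintro x y z (rfl | ⟨rfl, rfl⟩ | ⟨rfl, rfl⟩) (h | ⟨h, h'⟩ | ⟨h, h'⟩) <;> simp_all⟩

/-- The automaton obtained by identifying two states. -/
def identAut (M : Autom A) (p q : M.Q) : Autom A where
  Q := Quotient (pairSetoid p q)
  q0 := Quotient.mk _ M.q0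
  E := {e | ∃ e' ∈ M.E, e = (Quotient.mk _ e'.1, e'.2.1, Quotient.mk _ e'.2.2)}

theorem identAut_spec (M : Autom A) (p q : M.Q) : ∃ f : M.Q → (identAut M p q).Q,
    IsQ M (identAut M p q) f ∧ ∀ x y, f x = f y ↔ x = y ∨ (x = p ∧ y = q) ∨ (x = q ∧ y = p) :=
  ⟨Quotient.mk _, ⟨Quotient.mk_surjective, rfl, fun _ => Iff.rfl⟩, fun _ _ => Quotient.eq⟩

/-- There is a sequence of type 1 reductions from `X`, compatible with `π`, identifying `R`-related
states. -/
def Foldable (X : Autom A) {P : Type} (π : X.Q → P) (R : X.Q → X.Q → Prop) : Prop :=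
  ∃ (Y : Autom A) (f : X.Q → Y.Q), Relation.ReflTransGen Red1 X Y ∧ IsQ X Y f ∧
    (∀ x y, f x = f y → π x = π y) ∧ ∀ x y, R x y → f x = f y

theorem Foldable.mono {X : Autom A} {P : Type} {π : X.Q → P} {R R' : X.Q → X.Q → Prop}
    (h : Foldable X π R) (h' : ∀ x y, R' x y → R x y ∨ x = y) : Foldable X π R' := by
  obtain ⟨Y, f, h1, h2, h3, h4⟩ := h
  refine ⟨Y, f, h1, h2, h3, fun x y k => ?_⟩
  rcases h' x y k with k | rfl
  · exact h4 _ _ k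
  · rfl

theorem Foldable.step {X : Autom A} {P : Type} {π : X.Q → P} {R : X.Q → X.Q → Prop}
    (h : Foldable X π R) {x x' y y' : X.Q} {a : Ltr A} (hR : R x x') (h1 : (x, a, y) ∈ X.E)
    (h2 : (x', a, y') ∈ X.E) (hπ : π y = π y') :
    Foldable X π (fun s t => R s t ∨ (s = y ∧ t = y')) := by
  obtain ⟨Y, f, k1, k2, k3, k4⟩ := h
  by_cases he : f y = f y'
  · refine ⟨Y, f, k1, k2, k3, ?_⟩
    rintro s t (h | ⟨rfl, rfl⟩)
    · exact k4 _ _ h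
    · exact he
  · obtain ⟨g, g1, g2⟩ := identAut_spec Y (f y) (f y')
    have hred : Red1 Y (identAut Y (f y) (f y')) := by
      refine ⟨f y, f y', f x, a, he, k2.isHom.2 _ _ _ h1, ?_, g, g1.1, g1.2.1, g2, g1.2.2⟩
      rw [k4 _ _ hR]; exact k2.isHom.2 _ _ _ h2
    refine ⟨_, g ∘ f, k1.tail hred, k2.comp g1, ?_, ?_⟩
    · intro s t hst
      rcases (g2 _ _).1 hst with h | ⟨h, h'⟩ | ⟨h, h'⟩
      · exact k3 _ _ h
      · rw [k3 _ _ h, k3 _ _ h', hπ]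
      · rw [k3 _ _ h, k3 _ _ h', hπ]
    · rintro s t (h | ⟨rfl, rfl⟩)
      · simp [k4 _ _ h]
      · exact (g2 _ _).2 (by simp)

theorem path_states {M : Autom A} {x y : M.Q} {w : List (Ltr A)} (h : M.Path x w y) :
    ∃ s : ℕ → M.Q, s 0 = x ∧ s w.length = y ∧ ∀ i (hi : i < w.length), (s i, w[i], s (i+1)) ∈ M.E := by
  induction w generalizing x with
  | nil => rw [path_nil_iff] at h; subst h; exact ⟨fun _ => x, rfl, rfl, by simp⟩
  | cons a w ih =>
    obtain ⟨r, h1, h2⟩ := path_cons_iff.1 h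
    obtain ⟨s, k1, k2, k3⟩ := ih h2
    refine ⟨fun n => Nat.casesOn n x s, rfl, k2, ?_⟩
    intro i hi
    cases i with
    | zero => simpa [k1] using h1
    | succ i => exact k3 i (by simpa using hi)

/-- Marked points of the loop added by an expansion at `q0`. -/
def expC (M : Autom A) (n : ℕ) (i : ℕ) : M.Q ⊕ {i : ℕ // 0 < i ∧ i < n} :=
  if h : 0 < i ∧ i < n then Sum.inr ⟨i, h⟩ else Sum.inl M.q0

theorem expC_in (M : Autom A) {n i : ℕ} (h : 0 < i ∧ i < n) : expC M n i = Sum.inr ⟨i, h⟩ :=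
  dif_pos h

theorem expC_out (M : Autom A) {n i : ℕ} (h : ¬ (0 < i ∧ i < n)) : expC M n i = Sum.inl M.q0 :=
  dif_neg h

/-- The expansion at `q0` by `w`. -/
def expAut (M : Autom A) (w : List (Ltr A)) : Autom A where
  Q := M.Q ⊕ {i : ℕ // 0 < i ∧ i < w.length}
  q0 := Sum.inl M.q0
  E := {e | (∃ e' ∈ M.E, e = (Sum.inl e'.1, e'.2.1, Sum.inl e'.2.2)) ∨
    ∃ i : Fin w.length,
      e = (expC M w.length i, w.get i, expC M w.length (i + 1)) ∨
      e = (expC M w.length (i + 1), Ltr.inv (w.get i), expC M w.length i)}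

theorem expAut_isExpansion (M : Autom A) (w : List (Ltr A)) (hw : w ≠ []) :
    M.IsExpansion M.q0 w M.q0 (expAut M w) := by
  refine ⟨hw, Sum.inl, fun i => expC M w.length i, Sum.inl_injective, rfl, ?_, ?_, ?_, ?_, ?_, ?_⟩
  · exact expC_out M (by simp)
  · exact expC_out M (by simp)
  · rintro i h1 h2 ⟨y, hy⟩
    simp [expC, h1, h2] at hy
  · intro i j h1 h2 h
    by_cases hj : 0 < (j : ℕ) ∧ (j : ℕ) < w.length
    · simp only [expC, h1, h2, hj, and_self, dite_true] at h
      have := Sum.inr_injective h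
      simp only [Subtype.mk.injEq] at this
      exact Fin.ext this
    · have e1 : expC M w.length i = expC M w.length j := h
      rw [expC_in M ⟨h1, h2⟩, expC_out M hj] at e1
      cases e1
  · rintro (x | ⟨i, hi⟩)
    · exact Or.inl ⟨x, rfl⟩
    · refine Or.inr ⟨⟨i, by omega⟩, expC_in M hi⟩
  · intro e
    exact Iff.rfl

theorem expAut_fold (M : Autom A) (hd : M.Dual) (u v : List (Ltr A)) (p q : M.Q)
    (hu : M.Path M.q0 u p) (hv : M.Path q v M.q0) (N : Autom A)
    (hN : M.IsIdentification p q N) :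
    ∃ Y, Relation.ReflTransGen Red1 (expAut M (u ++ v)) Y ∧ Isomorphic Y N := by
  obtain ⟨ψ, hψ, hk⟩ := hN.isQ
  have hNd := hψ.dual hd
  obtain ⟨s, s0, s1, s2⟩ := path_states hu
  obtain ⟨t, t0, t1, t2⟩ := path_states hv
  have hpq : ψ p = ψ q := (hk p q).2 (by simp)
  set X := expAut M (u ++ v) with hX
  set n := (u ++ v).length with hn
  have hn' : n = u.length + v.length := by simp [hn]
  let c : ℕ → X.Q := expC M n
  let inl : M.Q → X.Q := Sum.inl
  have hc0 : c 0 = inl M.q0 := expC_out M (by simp)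
  have hcn : c n = inl M.q0 := expC_out M (by simp)
  let d : ℕ → N.Q := fun i => if i ≤ u.length then ψ (s i) else ψ (t (i - u.length))
  let π : X.Q → N.Q := Sum.elim ψ (fun i => d i)
  have hd1 : ∀ i, i ≤ u.length → d i = ψ (s i) := fun i hi => by simp [d, hi]
  have hd2 : ∀ j, d (u.length + j) = ψ (t j) := by
    intro j
    cases j with
    | zero => simp [d, s1, t0, hpq]
    | succ j => simp [d]
  have hπl : ∀ x, π (inl x) = ψ x := fun x => rfl
  have hπc : ∀ i, i ≤ n → π (c i) = d i := by
    intro i hi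
    by_cases h : 0 < i ∧ i < n
    · simp [π, c, expC, h]
    · rcases Nat.eq_zero_or_pos i with rfl | h0
      · rw [hc0, hd1 0 (Nat.zero_le _), s0, hπl]
      · have : i = n := by omega
        rw [this, hcn, hn', hd2, t1, hπl]
  have hEl : ∀ x a y, (x, a, y) ∈ M.E → (inl x, a, inl y) ∈ X.E := fun x a y h =>
    Or.inl ⟨_, h, rfl⟩
  have hEc : ∀ i (hi : i < n), (c i, (u ++ v)[i], c (i+1)) ∈ X.E := fun i hi =>
    Or.inr ⟨⟨i, hi⟩, Or.inl rfl⟩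
  have hEc' : ∀ i (hi : i < n), (c (i+1), Ltr.inv (u ++ v)[i], c i) ∈ X.E := fun i hi =>
    Or.inr ⟨⟨i, hi⟩, Or.inr rfl⟩
  have hNE : ∀ i (hi : i < n), (d i, (u ++ v)[i], d (i+1)) ∈ N.E := by
    intro i hi
    by_cases h : i < u.length
    · rw [hd1 i h.le, hd1 (i+1) h, List.getElem_append_left h]
      exact hψ.isHom.2 _ _ _ (s2 i h)
    · obtain ⟨j, rfl⟩ := Nat.exists_eq_add_of_le (not_lt.1 h)
      rw [hd2, add_assoc, hd2, List.getElem_append_right (by omega)]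
      simp only [Nat.add_sub_cancel_left]
      exact hψ.isHom.2 _ _ _ (t2 j (by omega))
  have hπ : IsQ X N π := by
    refine ⟨?_, ?_, ?_⟩
    · intro y
      obtain ⟨x, rfl⟩ := hψ.1 y
      exact ⟨inl x, rfl⟩
    · exact hψ.2.1
    · intro e
      constructor
      · obtain ⟨x, a, y⟩ := e
        intro h
        obtain ⟨x', y', h', rfl, rfl⟩ := hψ.edge h
        exact ⟨_, hEl _ _ _ h', rfl⟩
      · rintro ⟨e', h, rfl⟩
        rcases h with ⟨e, h, rfl⟩ | ⟨i, rfl | rfl⟩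
        · exact hψ.isHom.2 _ _ _ h
        · have h1 := hπc i i.2.le
          have h2 := hπc (i+1) i.2
          change (π (c i), (u ++ v)[i.1], π (c (i+1))) ∈ N.E
          rw [h1, h2]; exact hNE i i.2
        · have h1 := hπc i i.2.le
          have h2 := hπc (i+1) i.2
          change (π (c (i+1)), Ltr.inv (u ++ v)[i.1], π (c i)) ∈ N.E
          rw [h1, h2]; exact (hNd _ _ _).1 (hNE i i.2)
  have hA : ∀ i, i ≤ u.length → Foldable X π (fun a b => ∃ j ≤ i, a = c j ∧ b = inl (s j)) := by
    intro i
    induction i with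
    | zero =>
      intro _
      refine ⟨X, id, Relation.ReflTransGen.refl, IsQ.refl X, fun x y h => congrArg π h, ?_⟩
      rintro x y ⟨j, hj, rfl, rfl⟩
      obtain rfl : j = 0 := by omega
      rw [hc0, s0]
    | succ i ih =>
      intro hi
      have hlt : i < u.length := hi
      have hin : i < n := by omega
      have e1 := hEc i hin
      rw [List.getElem_append_left hlt] at e1
      refine ((ih hlt.le).step ⟨i, le_rfl, rfl, rfl⟩ e1 (hEl _ _ _ (s2 i hlt)) ?_).mono ?_
      · rw [hπc _ (by omega), hπl, hd1 _ hi]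
      · rintro x y ⟨j, hj, rfl, rfl⟩
        left
        by_cases h : j ≤ i
        · exact Or.inl ⟨j, h, rfl, rfl⟩
        · obtain rfl : j = i + 1 := by omega
          exact Or.inr ⟨rfl, rfl⟩
  have hB : ∀ k, k ≤ v.length → Foldable X π (fun a b => (∃ j ≤ u.length, a = c j ∧ b = inl (s j)) ∨
      ∃ j ≤ k, a = c (n - j) ∧ b = inl (t (v.length - j))) := by
    intro k
    induction k with
    | zero =>
      intro _
      refine (hA _ le_rfl).mono ?_
      rintro x y (h | ⟨j, hj, rfl, rfl⟩)
      · exact Or.inl h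
      · obtain rfl : j = 0 := by omega
        right
        simp only [Nat.sub_zero]
        rw [hcn, t1]
    | succ k ih =>
      intro hk
      have hlt : v.length - (k+1) < v.length := by omega
      have hin : n - (k+1) < n := by omega
      have e1 := hEc' _ hin
      rw [List.getElem_append_right (by omega)] at e1
      have i1 : n - (k+1) + 1 = n - k := by omega
      have i2 : n - (k+1) - u.length = v.length - (k+1) := by omega
      have i3 : v.length - (k+1) + 1 = v.length - k := by omega
      have e2 := (hd _ _ _).1 (t2 _ hlt)
      simp only [i1, i2] at e1
      simp only [i3] at e2
      refine ((ih (by omega)).step (Or.inr ⟨k, le_rfl, rfl, rfl⟩) e1 (hEl _ _ _ e2) ?_).mono ?_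
      · rw [hπc _ (by omega), hπl, ← hd2]
        congr 1; omega
      · rintro x y (h | ⟨j, hj, rfl, rfl⟩)
        · exact Or.inl (Or.inl (Or.inl h))
        · left
          by_cases h : j ≤ k
          · exact Or.inl (Or.inr ⟨j, h, rfl, rfl⟩)
          · obtain rfl : j = k + 1 := by omega
            exact Or.inr ⟨rfl, rfl⟩
  obtain ⟨Y, f, hY, hf, hfπ, hfR⟩ := hB _ le_rfl
  have r1 : ∀ j, j ≤ u.length → f (c j) = f (inl (s j)) := fun j hj =>
    hfR _ _ (Or.inl ⟨j, hj, rfl, rfl⟩)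
  have r2 : ∀ j, j ≤ v.length → f (c (u.length + j)) = f (inl (t j)) := fun j hj =>
    hfR _ _ (Or.inr ⟨v.length - j, by omega, by congr 1; omega, by congr 2; omega⟩)
  have rpq : f (inl p) = f (inl q) := by
    rw [← s1, ← t0, ← r1 _ le_rfl, ← r2 0 (Nat.zero_le _)]; rfl
  have rep : ∀ x : X.Q, ∃ z, f x = f (inl z) := by
    rintro (x | ⟨i, hi⟩)
    · exact ⟨x, rfl⟩
    · have hci : c i = Sum.inr ⟨i, hi⟩ := expC_in M hi
      rw [← hci]
      by_cases h : i ≤ u.length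
      · exact ⟨_, r1 i h⟩
      · obtain ⟨j, rfl⟩ := Nat.exists_eq_add_of_le (le_of_not_ge h)
        exact ⟨_, r2 j (by omega)⟩
  refine ⟨Y, hY, isomorphic_of_isQ hf hπ fun x y => ⟨hfπ x y, fun h => ?_⟩⟩
  obtain ⟨z, hz⟩ := rep x
  obtain ⟨z', hz'⟩ := rep y
  rw [hfπ _ _ hz, hfπ _ _ hz', hπl, hπl] at h
  rw [hz, hz']
  rcases (hk _ _).1 h with rfl | ⟨rfl, rfl⟩ | ⟨rfl, rfl⟩
  · rfl
  · exact rpq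
  · exact rpq.symm

end Autom

/-- Proposition 2.4: if `M →i^{p=q} N` with reduced words `u, v` labeling paths
`q →v q₀ →u p`, then `M →e^{uv} N` and `L(N)ρ = ⟨H, (uv)ρ⟩`; in particular
`rank L(N)ρ ≤ 1 + rank H`, and, in case of equality, `H ≤ff L(N)ρ` and any basis `C`
of `H` extends to the basis `C ∪ {(uv)ρ}` of `L(N)ρ`. -/
theorem istep_langRho_and_rank
    {A : Type} (M : Autom A) (hMinv : M.IsInv) (hMred : M.IsRed)
    (H : Subgroup (FreeGroup A)) (hH : M.langRho = ↑H)
    (u v : List (Ltr A)) (hured : IsReducedWord u) (hvred : IsReducedWord v)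
    (p q : M.Q) (hu : M.Path M.q0 u p) (hv : M.Path q v M.q0) (hpq : p ≠ q)
    (N : Autom A) (hstep : M.IStep p q N) :
    M.EStep (u ++ v) N ∧
    ∀ K : Subgroup (FreeGroup A),
      K = Subgroup.closure (↑H ∪ {FreeGroup.mk (u ++ v)}) →
      N.langRho = ↑K ∧
      rk K ≤ 1 + rk H ∧
      (rk K = 1 + rk H →
        FreeFactor H K ∧
        ∀ C : Set (FreeGroup A), IsFreeBasis C H →
          IsFreeBasis (C ∪ {FreeGroup.mk (u ++ v)}) K) := by
  obtain ⟨hdet, htrim, hdual⟩ := hMinv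
  obtain ⟨-, N', N'', hid, ⟨M₁, hr1, hM₁, hr2, -⟩, hiso⟩ := hstep
  have hconn : M.Conn := fun x => by
    obtain ⟨w, _, h, _⟩ := htrim x
    exact ⟨w, h⟩
  obtain ⟨ψ, hψ, -⟩ := hid.isQ
  have hrho := hid.langRho hdual hconn H hH hu hv
  obtain ⟨d1, c1, e1, l1, f1⟩ :=
    Autom.red1_star hr1 (hψ.dual hdual) (hψ.conn hconn) (hψ.isRed hMred) _ hrho
  have hM₁N : M₁ = N'' := by
    rcases Relation.ReflTransGen.cases_head hr2 with h | ⟨_, h, -⟩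
    · exact h
    · exact absurd h (Autom.not_red2 e1)
  subst hM₁N
  constructor
  · have hne : u ++ v ≠ [] := by
      intro h
      obtain ⟨rfl, rfl⟩ := List.append_eq_nil_iff.1 h
      exact hpq ((Autom.path_nil_iff.1 hu).symm.trans (Autom.path_nil_iff.1 hv).symm)
    obtain ⟨Y, hY, hYN⟩ := Autom.expAut_fold M hdual u v p q hu hv N' hid
    obtain ⟨Z, hZ, hZM⟩ := hYN.red1_star hr1
    obtain ⟨θ, hθ⟩ := hZM.symm.isQ
    exact ⟨_, Z, Autom.expAut_isExpansion M _ hne,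
      ⟨Z, hY.trans hZ, hZM.det hM₁, Relation.ReflTransGen.refl,
        fun _ => Autom.not_red2 (hθ.isRed e1)⟩, hZM.trans hiso⟩
  · intro K hK
    rw [← hK] at l1
    refine ⟨by rw [← hiso.langRho, l1], rank_part H K _ hK ?_⟩
    intro hfg
    obtain ⟨hfin, B, hB, hKB⟩ := Autom.finite_of_fg d1 hM₁ e1 K l1 hfg
    have hHK : H ≤ K := by
      rw [hK]; exact fun x hx => Subgroup.subset_closure (Or.inl hx)
    exact Autom.fg_of_finite hdual hdet hconn H hH (hid.finite (f1 hfin)) B hB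
      (fun w hw hwH => hKB w hw (hHK hwH))
end

section
/- Let 𝒜, 𝒜' and 𝓑 be reduced inverse automata over Ã such that 𝒜' is obtained from 𝒜 by a reduced expansion σ₁ and 𝓑 is obtained from 𝒜' by an i-step σ₂. Then there exists a sequence σ̄' of one or two steps, each an i-step or a reduced expansion, transforming 𝒜 into 𝓑 and satisfying λ(σ̄') ≺ λ(σ₁, σ₂). -/
open Function

namespace ReStepAux

open Autom

variable {A : Type}

/-! ### Letters, words -/

lemma inv_inv' (a : Ltr A) : Ltr.inv (Ltr.inv a) = a := by
  simp [Ltr.inv]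

lemma inv_ne (a : Ltr A) : Ltr.inv a ≠ a := by
  intro h
  have := congrArg Prod.snd h
  simp [Ltr.inv] at this

lemma red_iff (w : List (Ltr A)) :
    IsReducedWord w ↔ List.IsChain (fun x y => y ≠ Ltr.inv x) w := by
  induction w with
  | nil => simp [IsReducedWord]
  | cons a w ih =>
    have key : IsReducedWord (a :: w) ↔ (∀ v, w ≠ Ltr.inv a :: v) ∧ IsReducedWord w := by
      constructor
      · intro h
        refine ⟨fun v hv => h [] v a.1 a.2 (by simp [hv, Ltr.inv]), fun u v x b hw => ?_⟩
        exact h (a :: u) v x b (by simp [hw])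
      · rintro ⟨h1, h2⟩ u v x b hw
        cases u with
        | nil =>
          simp only [List.nil_append, List.cons.injEq] at hw
          obtain ⟨rfl, rfl⟩ := hw
          exact h1 v rfl
        | cons c u =>
          simp only [List.cons_append, List.cons.injEq] at hw
          exact h2 u v x b hw.2
    rw [key, ih]
    cases w with
    | nil => simp
    | cons b w =>
      rw [List.isChain_cons_cons]
      refine and_congr_left fun _ => ?_
      constructor
      · intro h e
        exact h w (by rw [e])
      · intro h v e
        exact h (List.cons.inj e).1

lemma red_nil : IsReducedWord ([] : List (Ltr A)) := by rw [red_iff]; simp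

lemma red_left {u v : List (Ltr A)} (h : IsReducedWord (u ++ v)) : IsReducedWord u := by
  rw [red_iff] at *; exact (List.isChain_append.1 h).1

lemma red_right {u v : List (Ltr A)} (h : IsReducedWord (u ++ v)) : IsReducedWord v := by
  rw [red_iff] at *; exact (List.isChain_append.1 h).2.1

lemma red_mid {u b v : List (Ltr A)} (hb : b ≠ []) (h1 : IsReducedWord (u ++ b))
    (h2 : IsReducedWord (b ++ v)) : IsReducedWord (u ++ (b ++ v)) := by
  rw [red_iff] at *
  rw [List.isChain_append] at h1 ⊢
  refine ⟨h1.1, h2, ?_⟩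
  have : (b ++ v).head? = b.head? := by
    cases b with
    | nil => exact absurd rfl hb
    | cons x b => simp
  rw [this]; exact h1.2.2

lemma wordInv_length (w : List (Ltr A)) : (wordInv w).length = w.length := by
  simp [wordInv]

/-- Maximal cancellation between two reduced words. -/
lemma cancel (u v : List (Ltr A)) (hu : IsReducedWord u) (hv : IsReducedWord v) :
    ∃ u' x v', u = u' ++ x ∧ v = wordInv x ++ v' ∧ IsReducedWord (u' ++ v') := by
  induction u using List.reverseRecOn generalizing v with
  | nil => exact ⟨[], [], v, rfl, rfl, hv⟩
  | append_singleton u a ih =>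
    by_cases h : ∃ v', v = Ltr.inv a :: v'
    · obtain ⟨v', rfl⟩ := h
      obtain ⟨u', x, v'', rfl, rfl, h3⟩ := ih v' (red_left hu)
        (red_right (u := [Ltr.inv a]) (v := v') hv)
      exact ⟨u', x ++ [a], v'', by simp, by simp [wordInv], h3⟩
    · refine ⟨u ++ [a], [], v, by simp, by simp [wordInv], ?_⟩
      rw [red_iff] at *
      rw [List.isChain_append]
      refine ⟨hu, hv, ?_⟩
      intro x hx y hy e
      simp at hx
      subst hx
      cases v with
      | nil => simp at hy
      | cons b v =>
        simp at hy
        subst hy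
        exact h ⟨v, by rw [e]⟩

/-! ### Paths -/

lemma path_nil {M : Autom A} {x y : M.Q} : M.Path x [] y ↔ x = y := by
  constructor
  · intro h; cases h; rfl
  · rintro rfl; exact PathOn.nil _

lemma path_cons {M : Autom A} {x y : M.Q} {a : Ltr A} {w : List (Ltr A)} :
    M.Path x (a :: w) y ↔ ∃ z, (x, a, z) ∈ M.E ∧ M.Path z w y := by
  constructor
  · intro h
    cases h with
    | cons h1 h2 => exact ⟨_, h1, h2⟩
  · rintro ⟨z, h1, h2⟩; exact PathOn.cons h1 h2

lemma path_append {M : Autom A} {x y : M.Q} {u w : List (Ltr A)} :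
    M.Path x (u ++ w) y ↔ ∃ z, M.Path x u z ∧ M.Path z w y := by
  induction u generalizing x with
  | nil => simp [path_nil]
  | cons a u ih =>
    simp only [List.cons_append, path_cons, ih]
    constructor
    · rintro ⟨z, h1, t, h2, h3⟩; exact ⟨t, ⟨z, h1, h2⟩, h3⟩
    · rintro ⟨t, ⟨z, h1, h2⟩, h3⟩; exact ⟨z, h1, t, h2, h3⟩

lemma path_single {M : Autom A} {x y : M.Q} {a : Ltr A} :
    M.Path x [a] y ↔ (x, a, y) ∈ M.E := by
  simp [path_cons, path_nil]

lemma path_map {M N : Autom A} {f : M.Q → N.Q} (hf : M.IsHom N f) {x y : M.Q}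
    {w : List (Ltr A)} (h : M.Path x w y) : N.Path (f x) w (f y) := by
  induction w generalizing x with
  | nil => rw [path_nil] at *; rw [h]
  | cons a w ih =>
    rw [path_cons] at *
    obtain ⟨z, h1, h2⟩ := h
    exact ⟨f z, hf.2 _ _ _ h1, ih h2⟩

lemma path_det {M : Autom A} (hM : M.Deterministic) {x y z : M.Q}
    {w : List (Ltr A)} (h : M.Path x w y) (h' : M.Path x w z) : y = z := by
  induction w generalizing x with
  | nil => rw [path_nil] at *; rw [← h, h']
  | cons a w ih =>
    rw [path_cons] at *
    obtain ⟨t, h1, h2⟩ := h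
    obtain ⟨t', h1', h2'⟩ := h'
    obtain rfl := hM _ _ _ _ h1 h1'
    exact ih h2 h2'

lemma path_inv {M : Autom A} (hM : M.Dual) {x y : M.Q}
    {w : List (Ltr A)} (h : M.Path x w y) : M.Path y (wordInv w) x := by
  induction w generalizing x with
  | nil => rw [path_nil] at h; rw [h]; exact path_nil.2 rfl
  | cons a w ih =>
    rw [path_cons] at h
    obtain ⟨t, h1, h2⟩ := h
    have : wordInv (a :: w) = wordInv w ++ [Ltr.inv a] := by simp [wordInv]
    rw [this, path_append]
    exact ⟨t, ih h2, path_single.2 ((hM _ _ _).1 h1)⟩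

lemma wordInv_wordInv (w : List (Ltr A)) : wordInv (wordInv w) = w := by
  simp only [wordInv, List.map_reverse, List.reverse_reverse, List.map_map]
  conv_rhs => rw [← List.map_id w]
  apply List.map_congr_left
  intro a _
  exact inv_inv' a

lemma path_inv_iff {M : Autom A} (hM : M.Dual) {x y : M.Q}
    {w : List (Ltr A)} : M.Path y (wordInv w) x ↔ M.Path x w y :=
  ⟨fun h => by simpa [wordInv_wordInv] using path_inv hM h, path_inv hM⟩

/-! ### Homomorphisms -/

/-- Every state is accessible. -/
def Acc (M : Autom A) : Prop := ∀ q, ∃ u, M.Path M.q0 u q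

/-- Every state other than the initial one has two outgoing letters. -/
def Deg2 (M : Autom A) : Prop :=
  ∀ x, x ≠ M.q0 → ∃ a b y z, a ≠ b ∧ (x, a, y) ∈ M.E ∧ (x, b, z) ∈ M.E

/-- Standing assumptions. -/
structure Nice (M : Autom A) : Prop where
  det : M.Deterministic
  dual : M.Dual
  acc : Acc M
  deg : Deg2 M

lemma hom_comp {M N P : Autom A} {f : M.Q → N.Q} {g : N.Q → P.Q} (hf : M.IsHom N f)
    (hg : N.IsHom P g) : M.IsHom P (g ∘ f) :=
  ⟨by simp [hf.1, hg.1], fun _ _ _ h => hg.2 _ _ _ (hf.2 _ _ _ h)⟩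

lemma hom_id (M : Autom A) : M.IsHom M id := ⟨rfl, fun _ _ _ h => h⟩

lemma hom_unique {M N : Autom A} (hM : Acc M) (hN : N.Deterministic) {f g : M.Q → N.Q}
    (hf : M.IsHom N f) (hg : M.IsHom N g) (x : M.Q) : f x = g x := by
  obtain ⟨u, hu⟩ := hM x
  have h1 := path_map hf hu
  have h2 := path_map hg hu
  rw [hf.1] at h1
  rw [hg.1] at h2
  exact path_det hN h1 h2

lemma iso_of_homs {M N : Autom A} (hM : Acc M) (hM' : M.Deterministic) (hN : Acc N)
    (hN' : N.Deterministic) {f : M.Q → N.Q} {g : N.Q → M.Q}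
    (hf : M.IsHom N f) (hg : N.IsHom M g) : M.Isomorphic N :=
  ⟨⟨f, g, fun x => hom_unique hM hM' (hom_comp hf hg) (hom_id M) x,
    fun x => hom_unique hN hN' (hom_comp hg hf) (hom_id N) x⟩, hf, hg⟩

lemma iso_trans {M N P : Autom A} (h : M.Isomorphic N) (h' : N.Isomorphic P) :
    M.Isomorphic P := by
  obtain ⟨f, h1, h2⟩ := h
  obtain ⟨g, h3, h4⟩ := h'
  exact ⟨f.trans g, hom_comp (f := f) (g := g) h1 h3, hom_comp (f := g.symm) (g := f.symm) h4 h2⟩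

lemma nice_of {M : Autom A} (h : M.IsInv) (h' : M.IsRed) : Nice M := by
  refine ⟨h.1, h.2.2, fun q => ?_, fun x hx => ?_⟩
  · obtain ⟨u, v, h1, _⟩ := h.2.1 q
    exact ⟨u, h1⟩
  · obtain ⟨u, v, hr, h1, h2⟩ := h' x
    cases v with
    | nil => exact absurd (path_nil.1 h2) hx
    | cons b v =>
      rcases List.eq_nil_or_concat' u with rfl | ⟨u, a, rfl⟩
      · exact absurd (path_nil.1 h1).symm hx
      · obtain ⟨y, _, hy⟩ := path_append.1 h1
        obtain ⟨z, hz, _⟩ := path_cons.1 h2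
        refine ⟨Ltr.inv a, b, y, z, ?_, (h.2.2 _ _ _).1 (path_single.1 hy), hz⟩
        rw [red_iff, List.isChain_append] at hr
        exact (hr.2.2 a (by simp) b (by simp)).symm

/-- The set of states on which the map is not injective is finite. -/
def FinKer {X Y : Type} (f : X → Y) : Prop := {x | ∃ y, y ≠ x ∧ f x = f y}.Finite

lemma FinKer.fiber {X Y : Type} {f : X → Y} (h : FinKer f) (b : Y) : (f ⁻¹' {b}).Finite := by
  by_cases hs : (f ⁻¹' {b}).Subsingleton
  · exact hs.finite
  · refine h.subset fun x hx => ?_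
    rw [Set.not_subsingleton_iff] at hs
    obtain ⟨y, hy, hyx⟩ := hs.exists_ne x
    exact ⟨y, hyx, hx.trans hy.symm⟩

lemma finKer_of_comp {X Y Z : Type} {f : X → Y} {g : Y → Z} (h : FinKer (g ∘ f)) :
    FinKer f :=
  h.subset fun _ ⟨y, h1, h2⟩ => ⟨y, h1, congrArg g h2⟩

lemma finKer_right {X Y Z : Type} {f : X → Y} {g : Y → Z} (hf : (Set.range f)ᶜ.Finite)
    (h : FinKer (g ∘ f)) : FinKer g := by
  have h2 : (f '' {x | ∃ y, y ≠ x ∧ (g ∘ f) x = (g ∘ f) y}).Finite := Set.Finite.image _ h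
  have h3 : (f '' (⋃ b ∈ g '' (Set.range f)ᶜ, (g ∘ f) ⁻¹' {b})).Finite := by
    apply Set.Finite.image
    exact (hf.image g).biUnion fun b _ => h.fiber b
  refine ((hf.union h2).union h3).subset ?_
  rintro x ⟨y, hyx, hxy⟩
  by_cases hx : x ∈ Set.range f
  · obtain ⟨m, rfl⟩ := hx
    by_cases hy : y ∈ Set.range f
    · obtain ⟨m', rfl⟩ := hy
      exact Or.inl (Or.inr ⟨m, ⟨m', fun e => hyx (by rw [e]), hxy⟩, rfl⟩)
    · refine Or.inr ⟨m, ?_, rfl⟩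
      simp only [Set.mem_iUnion]
      exact ⟨g y, ⟨y, hy, rfl⟩, hxy⟩
  · exact Or.inl (Or.inl hx)

lemma finKer_comp {X Y Z : Type} {f : X → Y} {g : Y → Z} (hf : FinKer f)
    (hg : FinKer g) : FinKer (g ∘ f) := by
  have h3 : (⋃ b ∈ {x | ∃ y, y ≠ x ∧ g x = g y}, f ⁻¹' {b}).Finite :=
    hg.biUnion fun b _ => hf.fiber b
  refine (Set.Finite.union hf h3).subset ?_
  rintro x ⟨y, hyx, hxy⟩
  by_cases e : f x = f y
  · exact Or.inl ⟨y, hyx, e⟩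
  · refine Or.inr ?_
    simp only [Set.mem_iUnion]
    exact ⟨f x, ⟨f y, fun e' => e e'.symm, hxy⟩, rfl⟩

lemma finKer_of_injective {X Y : Type} {f : X → Y} (hf : Injective f) : FinKer f := by
  have : {x | ∃ y, y ≠ x ∧ f x = f y} = ∅ := by
    ext x
    simp only [Set.mem_ofPred_eq, Set.mem_empty_iff_false, iff_false]
    rintro ⟨y, h, e⟩
    exact h (hf e).symm
  unfold FinKer
  rw [this]
  exact Set.finite_empty

/-! ### Quotients and reductions -/

/-- `Y` is a quotient of `X` through `f`. -/
structure IsQuot (X Y : Autom A) (f : X.Q → Y.Q) : Prop where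
  surj : Surjective f
  q0 : f X.q0 = Y.q0
  edges : ∀ e : Y.Q × Ltr A × Y.Q, e ∈ Y.E ↔ ∃ e' ∈ X.E, e = (f e'.1, e'.2.1, f e'.2.2)

lemma IsQuot.hom {X Y : Autom A} {f : X.Q → Y.Q} (h : IsQuot X Y f) : X.IsHom Y f :=
  ⟨h.q0, fun p a q he => (h.edges _).2 ⟨(p, a, q), he, rfl⟩⟩

lemma IsQuot.refl (X : Autom A) : IsQuot X X id :=
  ⟨surjective_id, rfl, fun e => ⟨fun h => ⟨e, h, rfl⟩, by rintro ⟨e', h, rfl⟩; exact h⟩⟩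

lemma IsQuot.trans {X Y Z : Autom A} {f : X.Q → Y.Q} {g : Y.Q → Z.Q} (h : IsQuot X Y f)
    (h' : IsQuot Y Z g) : IsQuot X Z (g ∘ f) := by
  refine ⟨h'.surj.comp h.surj, by simp [h.q0, h'.q0], fun e => ?_⟩
  rw [h'.edges]
  constructor
  · rintro ⟨e', he', rfl⟩
    obtain ⟨e'', h2, rfl⟩ := (h.edges _).1 he'
    exact ⟨e'', h2, rfl⟩
  · rintro ⟨e', he', rfl⟩
    exact ⟨_, (h.edges _).2 ⟨e', he', rfl⟩, rfl⟩

lemma IsQuot.dual {X Y : Autom A} {f : X.Q → Y.Q} (h : IsQuot X Y f) (hX : X.Dual) :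
    Y.Dual := by
  have : ∀ p a q, (p, a, q) ∈ Y.E → (q, Ltr.inv a, p) ∈ Y.E := by
    intro p a q hp
    obtain ⟨⟨p', a', q'⟩, he, h1⟩ := (h.edges _).1 hp
    simp only [Prod.mk.injEq] at h1
    obtain ⟨rfl, rfl, rfl⟩ := h1
    exact h.hom.2 _ _ _ ((hX _ _ _).1 he)
  intro p a q
  refine ⟨this p a q, fun h => ?_⟩
  have := this _ _ _ h
  rwa [inv_inv'] at this

lemma IsQuot.acc {X Y : Autom A} {f : X.Q → Y.Q} (h : IsQuot X Y f) (hX : Acc X) :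
    Acc Y := by
  intro y
  obtain ⟨x, rfl⟩ := h.surj y
  obtain ⟨u, hu⟩ := hX x
  exact ⟨u, h.q0 ▸ path_map h.hom hu⟩

lemma IsQuot.deg {X Y : Autom A} {f : X.Q → Y.Q} (h : IsQuot X Y f) (hX : Deg2 X) :
    Deg2 Y := by
  intro y hy
  obtain ⟨x, rfl⟩ := h.surj y
  obtain ⟨a, b, y, z, hab, h1, h2⟩ := hX x (fun e => hy (by rw [e, h.q0]))
  exact ⟨a, b, f y, f z, hab, h.hom.2 _ _ _ h1, h.hom.2 _ _ _ h2⟩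

/-- A homomorphism compatible with a quotient map factors. -/
lemma IsQuot.factor {X Y Z : Autom A} {f : X.Q → Y.Q} (h : IsQuot X Y f) {g : X.Q → Z.Q}
    (hg : X.IsHom Z g) (hk : ∀ x y, f x = f y → g x = g y) :
    ∃ k : Y.Q → Z.Q, Y.IsHom Z k ∧ ∀ x, k (f x) = g x := by
  let s := surjInv h.surj
  have hs : ∀ x, g (s (f x)) = g x := fun x => hk _ _ (surjInv_eq h.surj _)
  refine ⟨g ∘ s, ⟨?_, ?_⟩, hs⟩
  · rw [← h.q0, ← hg.1]; exact hs _
  · intro p a q he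
    obtain ⟨⟨p', a', q'⟩, he', h1⟩ := (h.edges _).1 he
    simp only [Prod.mk.injEq] at h1
    obtain ⟨rfl, rfl, rfl⟩ := h1
    simp only [comp_apply, hs]
    exact hg.2 _ _ _ he'

/-- The universal property of folding. -/
structure IsFold (X Y : Autom A) (f : X.Q → Y.Q) : Prop where
  quot : IsQuot X Y f
  univ : ∀ (Z : Autom A) (g : X.Q → Z.Q), Z.Deterministic → X.IsHom Z g →
    ∃ k : Y.Q → Z.Q, Y.IsHom Z k ∧ ∀ x, k (f x) = g x
  fin : FinKer f

lemma IsFold.refl (X : Autom A) : IsFold X X id :=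
  ⟨IsQuot.refl X, fun _ g _ h => ⟨g, h, fun _ => rfl⟩, finKer_of_injective injective_id⟩

lemma IsFold.trans {X Y Z : Autom A} {f : X.Q → Y.Q} {g : Y.Q → Z.Q} (h : IsFold X Y f)
    (h' : IsFold Y Z g) : IsFold X Z (g ∘ f) := by
  refine ⟨h.quot.trans h'.quot, fun W k hW hk => ?_, finKer_comp h.fin h'.fin⟩
  obtain ⟨k1, h1, h2⟩ := h.univ W k hW hk
  obtain ⟨k2, h3, h4⟩ := h'.univ W k1 hW h1
  exact ⟨k2, h3, fun x => by simp [h4, h2]⟩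

lemma ident_quot {X Y : Autom A} {p q : X.Q} (h : X.IsIdentification p q Y) :
    ∃ f, IsQuot X Y f ∧ FinKer f ∧
      ∀ x y, f x = f y ↔ x = y ∨ (x = p ∧ y = q) ∨ (x = q ∧ y = p) := by
  obtain ⟨f, h1, h2, h3, h4⟩ := h
  refine ⟨f, ⟨h1, h2, h4⟩, ?_, h3⟩
  refine (Set.toFinite {p, q}).subset ?_
  rintro x ⟨y, hy, e⟩
  rcases (h3 x y).1 e with h | h | h
  · exact absurd h.symm hy
  · exact Or.inl h.1
  · exact Or.inr h.1

lemma ident_fold {X Y : Autom A} {p q r : X.Q} {a : Ltr A} (h1 : (r, a, p) ∈ X.E)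
    (h2 : (r, a, q) ∈ X.E) (h3 : X.IsIdentification p q Y) :
    ∃ f, IsFold X Y f ∧ f p = f q := by
  obtain ⟨f, hf, hfin, hk⟩ := ident_quot h3
  refine ⟨f, ⟨hf, fun Z g hZ hg => hf.factor hg fun x y e => ?_, hfin⟩,
    (hk p q).2 (Or.inr (Or.inl ⟨rfl, rfl⟩))⟩
  have := hZ _ _ _ _ (hg.2 _ _ _ h1) (hg.2 _ _ _ h2)
  rcases (hk x y).1 e with rfl | ⟨rfl, rfl⟩ | ⟨rfl, rfl⟩
  · rfl
  · exact this
  · exact this.symm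

lemma red1_fold {X Y : Autom A} (h : Red1 X Y) : ∃ f, IsFold X Y f := by
  obtain ⟨p, q, r, a, hpq, h1, h2, h3⟩ := h
  obtain ⟨f, hf, _⟩ := ident_fold h1 h2 h3
  exact ⟨f, hf⟩

lemma red1s_fold {X Y : Autom A} (h : Relation.ReflTransGen Red1 X Y) :
    ∃ f, IsFold X Y f := by
  induction h with
  | refl => exact ⟨id, IsFold.refl X⟩
  | tail _ h ih =>
    obtain ⟨f, hf⟩ := ih
    obtain ⟨g, hg⟩ := red1_fold h
    exact ⟨_, hf.trans hg⟩

lemma no_red2 {X : Autom A} (hX : Deg2 X) (hA : Acc X) (Y : Autom A) : ¬ Red2 X Y := by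
  rintro ⟨p, q, a, hq, h1, h2, h3, -⟩
  by_cases hpq : p = q
  · subst hpq
    obtain ⟨u, hu⟩ := hA p
    have : ∀ (u : List (Ltr A)) x, X.Path x u p → x = p := by
      intro u
      induction u with
      | nil => intro x hx; exact path_nil.1 hx
      | cons b u ih =>
        intro x hx
        obtain ⟨z, hz, hz'⟩ := path_cons.1 hx
        obtain rfl := ih z hz'
        rcases h3 _ hz (Or.inr rfl) with h | h <;> exact congrArg Prod.fst h
    exact hq (this u _ hu).symm
  · obtain ⟨b, c, y, z, hbc, hb, hc⟩ := hX q hq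
    apply hbc
    have aux : ∀ b y, (q, b, y) ∈ X.E → b = Ltr.inv a := by
      intro b y hb
      rcases h3 _ hb (Or.inl rfl) with h | h
      · exact absurd (congrArg Prod.fst h).symm hpq
      · exact congrArg (fun e => e.2.1) h
    rw [aux b y hb, aux c z hc]

lemma reduction_fold {X Y : Autom A} (hX : Deg2 X) (hA : Acc X) (h : ReductionOf X Y) :
    Y.Deterministic ∧ ∃ f, IsFold X Y f := by
  obtain ⟨M₁, h1, h2, h3, -⟩ := h
  obtain ⟨f, hf⟩ := red1s_fold h1
  have := no_red2 (hf.quot.deg hX) (hf.quot.acc hA)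
  rcases Relation.ReflTransGen.cases_head h3 with rfl | ⟨Z, hZ, _⟩
  · exact ⟨h2, f, hf⟩
  · exact absurd hZ (this Z)

/-- The automaton obtained by identifying two states. -/
def identSetoid (X : Autom A) (p q : X.Q) : Setoid X.Q where
  r x y := x = y ∨ (x = p ∧ y = q) ∨ (x = q ∧ y = p)
  iseqv := ⟨fun _ => Or.inl rfl, by
    rintro x y (h | h | h)
    · exact Or.inl h.symm
    · exact Or.inr (Or.inr h.symm)
    · exact Or.inr (Or.inl h.symm), by
    rintro x y z (rfl | ⟨rfl, rfl⟩ | ⟨rfl, rfl⟩) (rfl | ⟨h, rfl⟩ | ⟨h, rfl⟩) <;> simp_all⟩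

def identAut (X : Autom A) (p q : X.Q) : Autom A where
  Q := Quotient (identSetoid X p q)
  q0 := Quotient.mk _ X.q0
  E := {e | ∃ e' ∈ X.E, e = (Quotient.mk _ e'.1, e'.2.1, Quotient.mk _ e'.2.2)}

lemma identAut_spec (X : Autom A) (p q : X.Q) : X.IsIdentification p q (identAut X p q) :=
  ⟨Quotient.mk _, Quotient.mk_surjective, rfl, fun _ _ => Quotient.eq, fun _ => Iff.rfl⟩

lemma exists_fold_aux {Z : Autom A} (hZ : Z.Deterministic) (n : ℕ) :
    ∀ (X : Autom A) (g : X.Q → Z.Q), X.IsHom Z g → FinKer g →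
      {x | ∃ y, y ≠ x ∧ g x = g y}.ncard = n →
      ∃ Y f, Relation.ReflTransGen Red1 X Y ∧ Y.Deterministic ∧ IsFold X Y f := by
  induction n using Nat.strong_induction_on with
  | _ n ih =>
    intro X g hg hfin hn
    by_cases hX : X.Deterministic
    · exact ⟨X, id, .refl, hX, IsFold.refl X⟩
    · simp only [Autom.Deterministic, not_forall] at hX
      obtain ⟨r, a, p, q, h1, h2, hpq⟩ := hX
      have hred : Red1 X (identAut X p q) := ⟨p, q, r, a, hpq, h1, h2, identAut_spec X p q⟩
      obtain ⟨f, hf, hfpq⟩ := ident_fold h1 h2 (identAut_spec X p q)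
      obtain ⟨k, hk, hkf⟩ := hf.univ Z g hZ hg
      have hcomp : k ∘ f = g := funext hkf
      have hfk : FinKer k := by
        apply finKer_right (f := f)
        · rw [hf.quot.surj.range_eq]; simp
        · rw [hcomp]; exact hfin
      have hgpq : g p = g q := by rw [← hkf, ← hkf, hfpq]
      have hlt : {x | ∃ y, y ≠ x ∧ k x = k y}.ncard < n := by
        rw [← hn]
        have hqS : q ∈ {x | ∃ y, y ≠ x ∧ g x = g y} := ⟨p, hpq, hgpq.symm⟩
        refine lt_of_le_of_lt ?_ (Set.ncard_sdiff_singleton_lt_of_mem hqS hfin)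
        have hfin' : ({x | ∃ y, y ≠ x ∧ g x = g y} \ {q}).Finite := Set.Finite.sdiff hfin
        refine le_trans (Set.ncard_le_ncard ?_ (hfin'.image f)) (Set.ncard_image_le hfin')
        rintro x ⟨y, hyx, hxy⟩
        obtain ⟨m, rfl⟩ := hf.quot.surj x
        obtain ⟨m', rfl⟩ := hf.quot.surj y
        by_cases hm : m = q
        · subst hm
          exact ⟨p, ⟨⟨m, fun e => hpq e.symm, hgpq⟩, hpq⟩, hfpq⟩
        · refine ⟨m, ⟨⟨m', fun e => hyx (by rw [e]), ?_⟩, hm⟩, rfl⟩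
          rw [← hkf, ← hkf, hxy]
      obtain ⟨Y, f', h3, h4, h5⟩ := ih _ hlt _ k hk hfk rfl
      exact ⟨Y, f' ∘ f, .head hred h3, h4, hf.trans h5⟩

/-- Folding, when finitely many identifications suffice. -/
lemma exists_fold {X Z : Autom A} (hZ : Z.Deterministic) (hA : Acc X) (hD : Deg2 X)
    {g : X.Q → Z.Q} (hg : X.IsHom Z g) (hfin : FinKer g) :
    ∃ Y f, ReductionOf X Y ∧ Y.Deterministic ∧ IsFold X Y f := by
  obtain ⟨Y, f, h1, h2, h3⟩ := exists_fold_aux hZ _ X g hg hfin rfl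
  exact ⟨Y, f, ⟨Y, h1, h2, .refl, no_red2 (h3.quot.deg hD) (h3.quot.acc hA)⟩, h2, h3⟩

/-! ### Expansions -/

lemma path_fn {Z : Autom A} {x y : Z.Q} {w : List (Ltr A)} (h : Z.Path x w y) :
    ∃ d : Fin (w.length + 1) → Z.Q, d 0 = x ∧ d (Fin.last w.length) = y ∧
      ∀ i : Fin w.length, (d i.castSucc, w.get i, d i.succ) ∈ Z.E := by
  induction w generalizing x with
  | nil =>
    obtain rfl := path_nil.1 h
    exact ⟨fun _ => x, rfl, rfl, fun i => i.elim0⟩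
  | cons a w ih =>
    obtain ⟨z, h1, h2⟩ := path_cons.1 h
    obtain ⟨d, d0, d1, d2⟩ := ih h2
    refine ⟨Fin.cons x d, rfl, ?_, ?_⟩
    · exact d1
    · intro i
      refine Fin.cases ?_ (fun j => ?_) i
      · change (x, a, d 0) ∈ Z.E
        rw [d0]; exact h1
      · exact d2 j

lemma fn_path {Z : Autom A} {w : List (Ltr A)} (d : Fin (w.length + 1) → Z.Q)
    (hd : ∀ i : Fin w.length, (d i.castSucc, w.get i, d i.succ) ∈ Z.E) (i : ℕ) :
    ∀ h : i < w.length + 1, Z.Path (d 0) (w.take i) (d ⟨i, h⟩) := by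
  induction i with
  | zero => intro h; exact path_nil.2 rfl
  | succ i ih =>
    intro h
    have hi : i < w.length := by omega
    rw [← List.take_append_getElem hi, path_append]
    exact ⟨_, ih (by omega), path_single.2 (hd ⟨i, hi⟩)⟩

lemma exp_spec {M X : Autom A} {p q : M.Q} {w : List (Ltr A)} (h : M.IsExpansion p w q X)
    (hMA : Acc M) (hMd : M.Dual) (hMg : Deg2 M) (hw : IsReducedWord w) :
    X.Dual ∧ Acc X ∧ Deg2 X ∧ ∃ φ : M.Q → X.Q, M.IsHom X φ ∧ X.Path (φ p) w (φ q) ∧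
      (Set.range φ)ᶜ.Finite ∧
      (∀ x, (∃ m, φ m = x) ∨ ∃ w1 w2, w = w1 ++ w2 ∧ w1 ≠ [] ∧ w2 ≠ [] ∧
        X.Path (φ p) w1 x) ∧
      ∀ (Z : Autom A) (χ : M.Q → Z.Q), Z.Dual → M.IsHom Z χ → Z.Path (χ p) w (χ q) →
        ∃ k : X.Q → Z.Q, X.IsHom Z k ∧ ∀ m, k (φ m) = χ m := by
  obtain ⟨hne, φ, c, hinj, h0, hc0, hc1, hcr, hci, hcov, hE⟩ := h
  have hφ : M.IsHom X φ := ⟨h0, fun p a q h => (hE _).2 (Or.inl ⟨(p, a, q), h, rfl⟩)⟩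
  have hcE : ∀ i : Fin w.length, (c i.castSucc, w.get i, c i.succ) ∈ X.E :=
    fun i => (hE _).2 (Or.inr ⟨i, Or.inl rfl⟩)
  have hcE' : ∀ i : Fin w.length, (c i.succ, Ltr.inv (w.get i), c i.castSucc) ∈ X.E :=
    fun i => (hE _).2 (Or.inr ⟨i, Or.inr rfl⟩)
  have hpath := fn_path c hcE
  have hcov' : ∀ x, (∃ m, φ m = x) ∨
      ∃ i : Fin (w.length + 1), 0 < (i : ℕ) ∧ (i : ℕ) < w.length ∧ c i = x := by
    intro x
    rcases hcov x with h | ⟨i, rfl⟩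
    · exact Or.inl h
    · rcases Nat.eq_zero_or_pos (i : ℕ) with hi | hi
      · obtain rfl : i = 0 := Fin.ext hi
        exact Or.inl ⟨p, hc0.symm⟩
      · rcases Nat.lt_or_ge (i : ℕ) w.length with hi' | hi'
        · exact Or.inr ⟨i, hi, hi', rfl⟩
        · obtain rfl : i = Fin.last w.length := Fin.ext (by simp; omega)
          exact Or.inl ⟨q, hc1.symm⟩
  have hst : ∀ x, (∃ m, φ m = x) ∨ ∃ w1 w2, w = w1 ++ w2 ∧ w1 ≠ [] ∧ w2 ≠ [] ∧
        X.Path (φ p) w1 x := by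
    intro x
    rcases hcov' x with h | ⟨i, hi, hi', rfl⟩
    · exact Or.inl h
    · refine Or.inr ⟨w.take i, w.drop i, (List.take_append_drop _ _).symm, ?_, ?_, ?_⟩
      · intro e
        have := congrArg List.length e
        simp at this
        rcases this with h | h
        · exact absurd h (by intro e; rw [e] at hi; simp at hi)
        · exact hne h
      · intro e
        have := congrArg List.length e
        simp at this
        omega
      · rw [← hc0]; exact hpath i i.2
  have hdual : X.Dual := by
    have : ∀ p a q, (p, a, q) ∈ X.E → (q, Ltr.inv a, p) ∈ X.E := by
      intro p a q h
      rcases (hE _).1 h with ⟨⟨p', a', q'⟩, h1, h2⟩ | ⟨i, h1 | h1⟩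
      · simp only [Prod.mk.injEq] at h2
        obtain ⟨rfl, rfl, rfl⟩ := h2
        exact hφ.2 _ _ _ ((hMd _ _ _).1 h1)
      · simp only [Prod.mk.injEq] at h1
        obtain ⟨rfl, rfl, rfl⟩ := h1
        exact hcE' i
      · simp only [Prod.mk.injEq] at h1
        obtain ⟨rfl, rfl, rfl⟩ := h1
        rw [inv_inv']
        exact hcE i
    intro p a q
    refine ⟨this p a q, fun h => ?_⟩
    have := this _ _ _ h
    rwa [inv_inv'] at this
  refine ⟨hdual, ?_, ?_, φ, hφ, ?_, ?_, hst, ?_⟩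
  · intro x
    rcases hst x with ⟨m, rfl⟩ | ⟨w1, w2, -, -, -, h⟩
    · obtain ⟨u, hu⟩ := hMA m
      exact ⟨u, h0 ▸ path_map hφ hu⟩
    · obtain ⟨u, hu⟩ := hMA p
      exact ⟨u ++ w1, path_append.2 ⟨_, h0 ▸ path_map hφ hu, h⟩⟩
  · intro x hx
    rcases hcov' x with ⟨m, rfl⟩ | ⟨i, hi, hi', rfl⟩
    · obtain ⟨a, b, y, z, hab, h1, h2⟩ := hMg m (fun e => hx (by rw [e, h0]))
      exact ⟨a, b, _, _, hab, hφ.2 _ _ _ h1, hφ.2 _ _ _ h2⟩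
    · obtain ⟨i, hi2⟩ := i
      obtain ⟨j, rfl⟩ : ∃ j, i = j + 1 := ⟨i - 1, by simp at hi; omega⟩
      simp only at hi'
      refine ⟨w[j + 1], Ltr.inv w[j], _, _, ?_, hcE ⟨j + 1, hi'⟩, hcE' ⟨j, by omega⟩⟩
      rw [red_iff, List.isChain_iff_getElem] at hw
      exact hw j hi'
  · rw [← hc0, ← hc1]
    have := hpath w.length (by omega)
    rwa [List.take_length] at this
  · refine (Set.finite_range c).subset ?_
    intro x hx
    rcases hcov x with h | h
    · exact absurd h hx
    · exact h
  · intro Z χ hZ hχ hp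
    obtain ⟨d, d0, d1, d2⟩ := path_fn hp
    classical
    let k : X.Q → Z.Q := fun x =>
      if h : ∃ m, φ m = x then χ h.choose
      else d ((hcov x).resolve_left h).choose
    have hk : ∀ m, k (φ m) = χ m := by
      intro m
      have h : ∃ m', φ m' = φ m := ⟨m, rfl⟩
      have : k (φ m) = χ h.choose := dif_pos h
      rw [this, hinj h.choose_spec]
    have hkc : ∀ i, k (c i) = d i := by
      intro i
      rcases Nat.eq_zero_or_pos (i : ℕ) with hi | hi
      · obtain rfl : i = 0 := Fin.ext hi
        rw [hc0, hk, d0]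
      · rcases Nat.lt_or_ge (i : ℕ) w.length with hi' | hi'
        · have h := hcr i hi hi'
          have h' : ¬ ∃ m, φ m = c i := h
          have : k (c i) = d ((hcov (c i)).resolve_left h').choose := dif_neg h'
          rw [this]
          congr 1
          exact (hci _ _ hi hi' ((hcov (c i)).resolve_left h').choose_spec.symm).symm
        · obtain rfl : i = Fin.last w.length := Fin.ext (by simp; omega)
          rw [hc1, hk, d1]
    refine ⟨k, ⟨by rw [← h0, hk, hχ.1], ?_⟩, hk⟩
    intro x a y h
    rcases (hE _).1 h with ⟨⟨p', a', q'⟩, h1, h2⟩ | ⟨i, h1 | h1⟩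
    · simp only [Prod.mk.injEq] at h2
      obtain ⟨rfl, rfl, rfl⟩ := h2
      rw [hk, hk]
      exact hχ.2 _ _ _ h1
    · simp only [Prod.mk.injEq] at h1
      obtain ⟨rfl, rfl, rfl⟩ := h1
      rw [hkc, hkc]
      exact d2 i
    · simp only [Prod.mk.injEq] at h1
      obtain ⟨rfl, rfl, rfl⟩ := h1
      rw [hkc, hkc]
      exact (hZ _ _ _).1 (d2 i)

/-- Position of the `i`-th vertex of the new path. -/
noncomputable def expC (M : Autom A) (p : M.Q) (w : List (Ltr A)) (q : M.Q)
    (i : Fin (w.length + 1)) :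
    M.Q ⊕ {i : Fin (w.length + 1) // 0 < (i : ℕ) ∧ (i : ℕ) < w.length} :=
  open Classical in
  if h : 0 < (i : ℕ) ∧ (i : ℕ) < w.length then Sum.inr ⟨i, h⟩
  else if (i : ℕ) = 0 then Sum.inl p else Sum.inl q

/-- The expansion automaton. -/
noncomputable def expAut (M : Autom A) (p : M.Q) (w : List (Ltr A)) (q : M.Q) : Autom A where
  Q := M.Q ⊕ {i : Fin (w.length + 1) // 0 < (i : ℕ) ∧ (i : ℕ) < w.length}
  q0 := Sum.inl M.q0
  E := {e | (∃ e' ∈ M.E, e = (Sum.inl e'.1, e'.2.1, Sum.inl e'.2.2)) ∨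
        ∃ i : Fin w.length,
          e = (expC M p w q i.castSucc, w.get i, expC M p w q i.succ) ∨
          e = (expC M p w q i.succ, Ltr.inv (w.get i), expC M p w q i.castSucc)}

lemma expAut_spec (M : Autom A) (p : M.Q) (w : List (Ltr A)) (q : M.Q) (hw : w ≠ []) :
    M.IsExpansion p w q (expAut M p w q) := by
  have hl : w.length ≠ 0 := by simpa using hw
  have hc : ∀ i : Fin (w.length + 1), ∀ h : 0 < (i : ℕ) ∧ (i : ℕ) < w.length,
      expC M p w q i = Sum.inr ⟨i, h⟩ := fun i h => by simp [expC, h]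
  refine ⟨hw, Sum.inl, expC M p w q, Sum.inl_injective, rfl, ?_, ?_, ?_, ?_, ?_,
    fun _ => Iff.rfl⟩
  · simp [expC]; rfl
  · simp [expC, hl]; rfl
  · rintro i h1 h2 ⟨m, hm⟩
    rw [hc i ⟨h1, h2⟩] at hm
    cases hm
  · intro i j h1 h2 e
    rw [hc i ⟨h1, h2⟩] at e
    by_cases h : 0 < (j : ℕ) ∧ (j : ℕ) < w.length
    · rw [hc j h] at e
      have := Sum.inr_injective e
      exact congrArg Subtype.val this
    · simp only [expC, dif_neg h] at e
      split_ifs at e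
  · rintro (m | ⟨i, hi⟩)
    · exact Or.inl ⟨m, rfl⟩
    · exact Or.inr ⟨i, hc i hi⟩

/-! ### Least automata -/

/-- `N` is the least inverse automaton over `M` in which `w` labels a path
from (the image of) `p` to (the image of) `q`. -/
structure Least (M : Autom A) (p : M.Q) (w : List (Ltr A)) (q : M.Q) (N : Autom A)
    (f : M.Q → N.Q) : Prop where
  hom : M.IsHom N f
  path : N.Path (f p) w (f q)
  univ : ∀ (Z : Autom A) (χ : M.Q → Z.Q), Z.Deterministic → Z.Dual → M.IsHom Z χ →
    Z.Path (χ p) w (χ q) → ∃ g : N.Q → Z.Q, N.IsHom Z g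

lemma Least.iso {M N N' : Autom A} {p q : M.Q} {w : List (Ltr A)} {f : M.Q → N.Q}
    {f' : M.Q → N'.Q} (h : Least M p w q N f) (h' : Least M p w q N' f')
    (hN : N.Deterministic) (hNd : N.Dual) (hNa : Acc N)
    (hN' : N'.Deterministic) (hNd' : N'.Dual) (hNa' : Acc N') : N.Isomorphic N' := by
  obtain ⟨g, hg⟩ := h.univ N' f' hN' hNd' h'.hom h'.path
  obtain ⟨g', hg'⟩ := h'.univ N f hN hNd h.hom h.path
  exact iso_of_homs hNa hN hNa' hN' hg hg'

lemma iso_refl (M : Autom A) : M.Isomorphic M := ⟨Equiv.refl _, hom_id M, hom_id M⟩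

/-- Existence of least automata, together with the corresponding steps. -/
lemma exists_least {M N : Autom A} (hM : Nice M) (p : M.Q) (w : List (Ltr A)) (q : M.Q)
    (hw : IsReducedWord w) (hN : N.Deterministic) (hNd : N.Dual) {χ : M.Q → N.Q}
    (hχ : M.IsHom N χ) (hfin : FinKer χ) (hp : N.Path (χ p) w (χ q)) :
    ∃ Y f, Nice Y ∧ Least M p w q Y f ∧ (Set.range f)ᶜ.Finite ∧
      (w ≠ [] → M.ExpStep p w q Y) ∧ (w = [] → p ≠ q → M.IStep p q Y) := by
  by_cases hw0 : w = []
  · subst hw0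
    have hpq : χ p = χ q := path_nil.1 hp
    obtain ⟨f, hf, hff, hk⟩ := ident_quot (identAut_spec M p q)
    have hfpq : f p = f q := (hk p q).2 (Or.inr (Or.inl ⟨rfl, rfl⟩))
    have hfac : ∀ {Z : Autom A} {ψ : M.Q → Z.Q}, M.IsHom Z ψ → ψ p = ψ q →
        ∃ k : (identAut M p q).Q → Z.Q, (identAut M p q).IsHom Z k ∧ ∀ x, k (f x) = ψ x := by
      intro Z ψ hψ e
      refine hf.factor hψ fun x y h => ?_
      rcases (hk x y).1 h with rfl | ⟨rfl, rfl⟩ | ⟨rfl, rfl⟩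
      · rfl
      · exact e
      · exact e.symm
    obtain ⟨k, hk1, hk2⟩ := hfac hχ hpq
    have hkf : FinKer k := by
      apply finKer_right (f := f)
      · rw [hf.surj.range_eq]; simp
      · rw [show k ∘ f = χ from funext hk2]; exact hfin
    obtain ⟨Y, g, hY1, hY2, hY3⟩ := exists_fold hN (hf.acc hM.acc) (hf.deg hM.deg) hk1 hkf
    have hq := hf.trans hY3.quot
    refine ⟨Y, g ∘ f, ⟨hY2, hq.dual hM.dual, hq.acc hM.acc, hq.deg hM.deg⟩,
      ⟨hq.hom, path_nil.2 (by simp [hfpq]), ?_⟩, ?_, fun h => absurd rfl h,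
      fun _ h => ⟨h, _, Y, identAut_spec M p q, hY1, iso_refl Y⟩⟩
    · intro Z ψ hZ hZd hψ e
      obtain ⟨k, hk1, hk2⟩ := hfac hψ (path_nil.1 e)
      obtain ⟨k', hk', _⟩ := hY3.univ Z k hZ hk1
      exact ⟨k', hk'⟩
    · rw [hq.surj.range_eq]; simp
  · have hX := expAut_spec M p w q hw0
    obtain ⟨hXd, hXa, hXg, φ, hφ, hφp, hφr, -, hext⟩ := exp_spec hX hM.acc hM.dual hM.deg hw
    obtain ⟨k, hk1, hk2⟩ := hext N χ hNd hχ hp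
    have hkf : FinKer k := by
      apply finKer_right (f := φ) hφr
      rw [show k ∘ φ = χ from funext hk2]; exact hfin
    obtain ⟨Y, g, hY1, hY2, hY3⟩ := exists_fold hN hXa hXg hk1 hkf
    have hq := hY3.quot
    refine ⟨Y, g ∘ φ, ⟨hY2, hq.dual hXd, hq.acc hXa, hq.deg hXg⟩,
      ⟨hom_comp hφ hq.hom, path_map hq.hom hφp, ?_⟩, ?_,
      fun _ => ⟨_, Y, hX, hY1, iso_refl Y⟩, fun h => absurd h hw0⟩
    · intro Z ψ hZ hZd hψ e
      obtain ⟨k, hk1, hk2⟩ := hext Z ψ hZd hψ e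
      obtain ⟨k', hk', _⟩ := hY3.univ Z k hZ hk1
      exact ⟨k', hk'⟩
    · refine (hφr.image g).subset ?_
      intro y hy
      obtain ⟨x, rfl⟩ := hq.surj y
      exact ⟨x, fun ⟨m, hm⟩ => hy ⟨m, by simp [hm]⟩, rfl⟩

/-! ### Adding a path that cannot be read -/

lemma trip {α β γ : Type*} {a a' : α} {b b' : β} {c c' : γ}
    (h : (a, b, c) = (a', b', c')) : a = a' ∧ b = b' ∧ c = c' := by
  cases h
  exact ⟨rfl, rfl, rfl⟩

lemma dual_of {X : Autom A} (h : ∀ p a q, (p, a, q) ∈ X.E → (q, Ltr.inv a, p) ∈ X.E) :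
    X.Dual := by
  intro p a q
  refine ⟨h p a q, fun h' => ?_⟩
  have := h _ _ _ h'
  rwa [inv_inv'] at this

/-- Adding one edge between two existing states. -/
def addEdge (M : Autom A) (p : M.Q) (a : Ltr A) (q : M.Q) : Autom A where
  Q := M.Q
  q0 := M.q0
  E := {e | e ∈ M.E ∨ e = (p, a, q) ∨ e = (q, Ltr.inv a, p)}

/-- Adding one edge to a new state. -/
def addLeaf (M : Autom A) (p : M.Q) (a : Ltr A) : Autom A where
  Q := Option M.Q
  q0 := some M.q0
  E := {e | (∃ x b y, (x, b, y) ∈ M.E ∧ e = (some x, b, some y)) ∨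
    e = (some p, a, none) ∨ e = (none, Ltr.inv a, some p)}

lemma embed_aux (n : ℕ) : ∀ (M : Autom A) (p : M.Q) (w : List (Ltr A)) (q : M.Q),
    w.length = n → M.Deterministic → M.Dual → IsReducedWord w → w ≠ [] →
    (∀ a w', w = a :: w' → ∀ y, (p, a, y) ∉ M.E) →
    (∀ w' b, w = w' ++ [b] → ∀ y, (q, Ltr.inv b, y) ∉ M.E) →
    ∃ (Z : Autom A) (ψ : M.Q → Z.Q), Z.Deterministic ∧ Z.Dual ∧ Injective ψ ∧
      M.IsHom Z ψ ∧ Z.Path (ψ p) w (ψ q) := by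
  induction n using Nat.strong_induction_on with
  | _ n ih =>
    intro M p w q hn hdet hdual hred hne hfst hlst
    cases w with
    | nil => exact absurd rfl hne
    | cons a w =>
      have hpa := hfst a w rfl
      rcases List.eq_nil_or_concat' w with rfl | ⟨w', b, rfl⟩
      · have hqa := hlst [] a rfl
        refine ⟨addEdge M p a q, id, ?_, ?_, injective_id, ⟨rfl, fun _ _ _ h => Or.inl h⟩,
          path_single.2 (Or.inr (Or.inl rfl))⟩
        · rintro (x : M.Q) c (y : M.Q) (z : M.Q) (h1 | h1 | h1) (h2 | h2 | h2)
          · exact hdet _ _ _ _ h1 h2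
          · obtain ⟨rfl, rfl, rfl⟩ := trip h2
            exact absurd h1 (hpa y)
          · obtain ⟨rfl, rfl, rfl⟩ := trip h2
            exact absurd h1 (hqa y)
          · obtain ⟨rfl, rfl, rfl⟩ := trip h1
            exact absurd h2 (hpa z)
          · rw [(trip h1).2.2, (trip h2).2.2]
          · exact absurd ((trip h2).2.1.symm.trans (trip h1).2.1) (inv_ne a)
          · obtain ⟨rfl, rfl, rfl⟩ := trip h1
            exact absurd h2 (hqa z)
          · exact absurd ((trip h1).2.1.symm.trans (trip h2).2.1) (inv_ne a)
          · rw [(trip h1).2.2, (trip h2).2.2]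
        · apply dual_of
          rintro (x : M.Q) c (y : M.Q) (h | h | h)
          · exact Or.inl ((hdual _ _ _).1 h)
          · replace h := trip h
            obtain ⟨rfl, rfl, rfl⟩ := h
            exact Or.inr (Or.inr rfl)
          · replace h := trip h
            obtain ⟨rfl, rfl, rfl⟩ := h
            rw [inv_inv']
            exact Or.inr (Or.inl rfl)
      · have hqb := hlst (a :: w') b rfl
        have h1det : (addLeaf M p a).Deterministic := by
          rintro x c y z (⟨x1, c1, y1, h1, e1⟩ | h1 | h1) (⟨x2, c2, y2, h2, e2⟩ | h2 | h2)
          · replace e1 := trip e1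
            replace e2 := trip e2
            obtain ⟨rfl, rfl, rfl⟩ := e1
            obtain ⟨e3, rfl, rfl⟩ := e2
            obtain rfl := Option.some.inj e3
            rw [hdet _ _ _ _ h1 h2]
          · replace e1 := trip e1
            replace h2 := trip h2
            obtain ⟨rfl, rfl, rfl⟩ := e1
            obtain ⟨e3, rfl, rfl⟩ := h2
            obtain rfl := Option.some.inj e3
            exact absurd h1 (hpa _)
          · replace e1 := trip e1
            replace h2 := trip h2
            exact absurd (e1.1.symm.trans h2.1) (by rintro ⟨⟩)
          · replace h1 := trip h1
            replace e2 := trip e2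
            obtain ⟨rfl, rfl, rfl⟩ := e2
            obtain ⟨e3, rfl, rfl⟩ := h1
            obtain rfl := Option.some.inj e3
            exact absurd h2 (hpa _)
          · replace h1 := trip h1
            replace h2 := trip h2
            rw [h1.2.2, h2.2.2]
          · replace h1 := trip h1
            replace h2 := trip h2
            exact absurd (h1.1.symm.trans h2.1) (by rintro ⟨⟩)
          · replace h1 := trip h1
            replace e2 := trip e2
            exact absurd (h1.1.symm.trans e2.1) (by rintro ⟨⟩)
          · replace h1 := trip h1
            replace h2 := trip h2
            exact absurd (h1.1.symm.trans h2.1) (by rintro ⟨⟩)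
          · replace h1 := trip h1
            replace h2 := trip h2
            rw [h1.2.2, h2.2.2]
        have h1dual : (addLeaf M p a).Dual := by
          apply dual_of
          rintro x c y (⟨x1, c1, y1, h1, e1⟩ | h | h)
          · replace e1 := trip e1
            obtain ⟨rfl, rfl, rfl⟩ := e1
            exact Or.inl ⟨_, _, _, (hdual _ _ _).1 h1, rfl⟩
          · replace h := trip h
            obtain ⟨rfl, rfl, rfl⟩ := h
            exact Or.inr (Or.inr rfl)
          · replace h := trip h
            obtain ⟨rfl, rfl, rfl⟩ := h
            rw [inv_inv']
            exact Or.inr (Or.inl rfl)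
        have hsome : M.IsHom (addLeaf M p a) some :=
          ⟨rfl, fun x b y h => Or.inl ⟨x, b, y, h, rfl⟩⟩
        have hinj : Injective (some : M.Q → (addLeaf M p a).Q) := Option.some_injective _
        have hedge : (addLeaf M p a).Path (some p) [a] none :=
          path_single.2 (Or.inr (Or.inl rfl))
        have hnone : ∀ c y, ((none : Option M.Q), c, y) ∈ (addLeaf M p a).E →
            c = Ltr.inv a := by
          rintro c y (⟨x1, c1, y1, h1, e1⟩ | h | h)
          · replace e1 := trip e1
            exact absurd e1.1 (by rintro ⟨⟩)
          · replace h := trip h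
            exact absurd h.1 (by rintro ⟨⟩)
          · replace h := trip h
            exact h.2.1
        have hred1 : IsReducedWord (w' ++ [b]) :=
          red_right (u := [a]) (v := w' ++ [b]) hred
        have hredc := (red_iff _).1 hred
        by_cases hcase : p = q ∧ b = Ltr.inv a
        · obtain ⟨rfl, rfl⟩ := hcase
          have hw' : w' ≠ [] := by
            rintro rfl
            exact hred [] [] a.1 a.2 (by simp [Ltr.inv])
          obtain ⟨Z, ψ, hZ1, hZ2, hZ3, hZ4, hZ5⟩ := ih w'.length (by simp at hn; omega)
            (addLeaf M p a) none w' none rfl h1det h1dual (red_left hred1) hw'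
            (by
              rintro c w'' rfl y hy
              have := hnone _ _ hy
              subst this
              exact hred [] (w'' ++ [Ltr.inv a]) a.1 a.2 (by simp [Ltr.inv]))
            (by
              rintro w'' c rfl y hy
              have h := hnone _ _ hy
              have h' := congrArg Ltr.inv h
              rw [inv_inv', inv_inv'] at h'
              subst h'
              exact hred (c :: w'') [] c.1 c.2 (by simp [Ltr.inv]))
          refine ⟨Z, ψ ∘ some, hZ1, hZ2, hZ3.comp hinj, hom_comp hsome hZ4, ?_⟩
          rw [show a :: (w' ++ [Ltr.inv a]) = [a] ++ (w' ++ [Ltr.inv a]) from rfl,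
            path_append]
          have h1 := path_map hZ4 hedge
          refine ⟨_, h1, path_append.2 ⟨_, hZ5, ?_⟩⟩
          exact path_inv hZ2 h1
        · obtain ⟨Z, ψ, hZ1, hZ2, hZ3, hZ4, hZ5⟩ := ih (w' ++ [b]).length
            (by simp at hn ⊢; omega)
            (addLeaf M p a) none (w' ++ [b]) (some q) rfl h1det h1dual hred1 (by simp)
            (by
              rintro c w'' e y hy
              have := hnone _ _ hy
              subst this
              rw [e] at hred
              exact hred [] w'' a.1 a.2 (by simp [Ltr.inv]))
            (by
              rintro w'' c e y hy
              have hbc : b = c := by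
                have := (List.append_inj_right' e rfl)
                simpa using this
              subst hbc
              rcases hy with ⟨x1, c1, y1, h1, e1⟩ | h | h
              · replace e1 := trip e1
                obtain ⟨e3, rfl, rfl⟩ := e1
                obtain rfl := Option.some.inj e3
                exact hqb _ h1
              · replace h := trip h
                refine hcase ⟨(Option.some.inj h.1).symm, ?_⟩
                rw [← h.2.1, inv_inv']
              · replace h := trip h
                exact absurd h.1 (by rintro ⟨⟩))
          refine ⟨Z, ψ ∘ some, hZ1, hZ2, hZ3.comp hinj, hom_comp hsome hZ4, ?_⟩
          rw [show a :: (w' ++ [b]) = [a] ++ (w' ++ [b]) from rfl, path_append]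
          exact ⟨_, path_map hZ4 hedge, hZ5⟩

/-! ### Single steps -/

lemma Least.congr {M N : Autom A} {p q p' q' : M.Q} {w w' : List (Ltr A)} {f : M.Q → N.Q}
    (h : Least M p w q N f) (hN : N.Deterministic) (hNd : N.Dual)
    (H : ∀ (Z : Autom A) (χ : M.Q → Z.Q), Z.Deterministic → Z.Dual → M.IsHom Z χ →
      (Z.Path (χ p) w (χ q) ↔ Z.Path (χ p') w' (χ q'))) : Least M p' w' q' N f :=
  ⟨h.hom, (H N f hN hNd h.hom).1 h.path, fun Z χ h1 h2 h3 h4 =>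
    h.univ Z χ h1 h2 h3 ((H Z χ h1 h2 h3).2 h4)⟩

lemma step_of_least (n : ℕ) {M N : Autom A} (hM : Nice M) (hN : N.Deterministic)
    (hNd : N.Dual) (hNa : Acc N) {f : M.Q → N.Q} (hfin : FinKer f) :
    ∀ (p : M.Q) (w : List (Ltr A)) (q : M.Q), w.length = n → IsReducedWord w →
      Least M p w q N f →
      (∃ g, N.IsHom M g) ∨ ∃ c, c ≤ w.length ∧ StepCost M N c := by
  induction n with
  | zero =>
    intro p w q hn hw hL
    obtain rfl := List.length_eq_zero_iff.1 hn
    by_cases hpq : p = q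
    · exact Or.inl (hL.univ M id hM.det hM.dual (hom_id M) (path_nil.2 hpq))
    · obtain ⟨Y, f', hY, hL', -, -, hI⟩ :=
        exists_least hM p [] q hw hN hNd hL.hom hfin hL.path
      obtain ⟨-, N', N'', h1, h2, h3⟩ := hI rfl hpq
      refine Or.inr ⟨0, le_rfl, Or.inl ⟨rfl, p, q, hpq, N', N'', h1, h2, ?_⟩⟩
      exact iso_trans h3 (hL'.iso hL hY.det hY.dual hY.acc hN hNd hNa)
  | succ n ih =>
    intro p w q hn hw hL
    by_cases hfst : ∀ a w', w = a :: w' → ∀ y, (p, a, y) ∉ M.E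
    · by_cases hlst : ∀ w' b, w = w' ++ [b] → ∀ y, (q, Ltr.inv b, y) ∉ M.E
      · have hne : w ≠ [] := by rintro rfl; simp at hn
        obtain ⟨Y, f', hY, hL', -, hE, -⟩ :=
          exists_least hM p w q hw hN hNd hL.hom hfin hL.path
        obtain ⟨N', N'', h1, h2, h3⟩ := hE hne
        refine Or.inr ⟨w.length, le_rfl, Or.inr ⟨p, w, q, hw, rfl, ⟨N', N'', h1, h2,
          iso_trans h3 (hL'.iso hL hY.det hY.dual hY.acc hN hNd hNa)⟩, f, ?_, hL.hom⟩⟩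
        obtain ⟨Z, ψ, hZ1, hZ2, hZ3, hZ4, hZ5⟩ :=
          embed_aux _ M p w q rfl hM.det hM.dual hw hne hfst hlst
        obtain ⟨g, hg⟩ := hL.univ Z ψ hZ1 hZ2 hZ4 hZ5
        intro x y e
        apply hZ3
        rw [hom_unique hM.acc hZ1 hZ4 (hom_comp hL.hom hg) x,
          hom_unique hM.acc hZ1 hZ4 (hom_comp hL.hom hg) y, comp_apply, comp_apply, e]
      · push Not at hlst
        obtain ⟨w', b, rfl, y, hy⟩ := hlst
        have hy' := (hM.dual _ _ _).1 hy
        rw [inv_inv'] at hy'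
        have hL2 : Least M p w' y N f := by
          refine hL.congr hN hNd ?_
          intro Z χ h1 h2 h3
          rw [path_append]
          constructor
          · rintro ⟨z, hz, hz'⟩
            have h4 := h3.2 _ _ _ hy
            have h5 := (h2 _ _ _).1 (path_single.1 hz')
            rw [h1 _ _ _ _ h4 h5]; exact hz
          · intro h
            exact ⟨_, h, path_single.2 (h3.2 _ _ _ hy')⟩
        rcases ih p w' y (by simpa using hn) (red_left hw) hL2 with h | ⟨c, h, h'⟩
        · exact Or.inl h
        · exact Or.inr ⟨c, le_trans h (by simp), h'⟩
    · push Not at hfst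
      obtain ⟨a, w', rfl, y, hy⟩ := hfst
      have hL2 : Least M y w' q N f := by
        refine hL.congr hN hNd ?_
        intro Z χ h1 h2 h3
        rw [path_cons]
        constructor
        · rintro ⟨z, hz, hz'⟩
          rw [h1 _ _ _ _ (h3.2 _ _ _ hy) hz]; exact hz'
        · intro h
          exact ⟨_, h3.2 _ _ _ hy, h⟩
      rcases ih y w' q (by simpa using hn) (red_right (u := [a]) (v := w') hw) hL2
        with h | ⟨c, h, h'⟩
      · exact Or.inl h
      · exact Or.inr ⟨c, le_trans h (by simp), h'⟩

lemma stepCost_iso {M N N' : Autom A} {c : ℕ} (h : StepCost M N c) (h' : N.Isomorphic N') :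
    StepCost M N' c := by
  rcases h with ⟨h0, p, q, hpq, X, Y, h1, h2, h3⟩ | ⟨p, w, q, hw, hc, ⟨X, Y, h1, h2, h3⟩, ψ, h4, h5⟩
  · exact Or.inl ⟨h0, p, q, hpq, X, Y, h1, h2, iso_trans h3 h'⟩
  · refine Or.inr ⟨p, w, q, hw, hc, ⟨X, Y, h1, h2, iso_trans h3 h'⟩, ?_⟩
    obtain ⟨e, he, _⟩ := h'
    exact ⟨e ∘ ψ, e.injective.comp h4, hom_comp (f := ψ) (g := e) h5 he⟩

/-! ### Two steps -/

lemma two_steps {M M'' N : Autom A} {n : ℕ} (hM : Nice M) (hM'' : Nice M'')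
    (hN : N.Deterministic) (hNd : N.Dual) (hNa : Acc N)
    {p q : M.Q} {w1 : List (Ltr A)} {f : M.Q → M''.Q}
    {a b : M''.Q} {w2 : List (Ltr A)} {h : M''.Q → N.Q}
    (hf : Least M p w1 q M'' f) (hh : Least M'' a w2 b N h)
    (hw1 : IsReducedWord w1) (hw2 : IsReducedWord w2)
    (hfin : FinKer (h ∘ f)) (hfin' : FinKer h)
    (hlen : w1.length + w2.length ≤ n) (hlen1 : w1.length < n)
    (hno : ¬ ∃ g, N.IsHom M g) :
    (∃ c, StepCost M N c ∧ costLT [c] [n, 0]) ∨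
    (∃ (M'' : Autom A) (c₁ c₂ : ℕ), StepCost M M'' c₁ ∧ StepCost M'' N c₂ ∧
      costLT [c₁, c₂] [n, 0]) := by
  have one : ∀ c, costLT [c] [n, 0] := fun c => Or.inl (by simp)
  rcases step_of_least _ hM hM''.det hM''.dual hM''.acc (finKer_of_comp hfin) p w1 q rfl hw1 hf
    with ⟨g, hg⟩ | ⟨c₁, hc₁, hs₁⟩
  · have hL : Least M (g a) w2 (g b) N (h ∘ f) := by
      have hfg : ∀ x, f (g x) = x := fun x =>
        hom_unique hM''.acc hM''.det (hom_comp hg hf.hom) (hom_id _) x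
      refine ⟨hom_comp hf.hom hh.hom, ?_, ?_⟩
      · simp only [comp_apply, hfg]; exact hh.path
      · intro Z χ h1 h2 h3 h4
        exact hh.univ Z (χ ∘ g) h1 h2 (hom_comp hg h3) h4
    rcases step_of_least _ hM hN hNd hNa hfin _ w2 _ rfl hw2 hL with h | ⟨c, hc, hs⟩
    · exact absurd h hno
    · exact Or.inl ⟨c, hs, one c⟩
  · rcases step_of_least _ hM'' hN hNd hNa hfin' a w2 b rfl hw2 hh with ⟨g, hg⟩ | ⟨c₂, hc₂, hs₂⟩
    · exact Or.inl ⟨c₁, stepCost_iso hs₁ (iso_of_homs hM''.acc hM''.det hNa hN hh.hom hg), one _⟩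
    · refine Or.inr ⟨M'', c₁, c₂, hs₁, hs₂, ?_⟩
      rcases Nat.lt_or_ge (c₁ + c₂) n with h | h
      · exact Or.inr (Or.inl ⟨rfl, by simpa using h⟩)
      · refine Or.inr (Or.inr ⟨rfl, by simp; omega, List.Lex.rel (by omega)⟩)

/-! ### Analysis of the hypotheses -/

lemma restep_spec {M M' : Autom A} (hM : Nice M) (hM' : M'.Deterministic)
    {p q : M.Q} {w : List (Ltr A)} (hw : IsReducedWord w) (h : M.REStep p w q M') :
    ∃ f, Least M p w q M' f ∧ Injective f ∧
      ∀ x, (∃ m, f m = x) ∨ ∃ w1 w2, w = w1 ++ w2 ∧ w1 ≠ [] ∧ w2 ≠ [] ∧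
        M'.Path (f p) w1 x := by
  obtain ⟨⟨X, Y, hX, hY, e, he, he'⟩, ψ, hψ, hψ'⟩ := h
  obtain ⟨hXd, hXa, hXg, φ, hφ, hφp, hφr, hst, hext⟩ := exp_spec hX hM.acc hM.dual hM.deg hw
  obtain ⟨hYd, g, hg⟩ := reduction_fold hXg hXa hY
  have hk : X.IsHom M' (e ∘ g) := hom_comp (g := e) hg.quot.hom he
  have hf : M.IsHom M' ((e ∘ g) ∘ φ) := hom_comp hφ hk
  refine ⟨(e ∘ g) ∘ φ, ⟨hf, path_map hk hφp, ?_⟩, ?_, ?_⟩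
  · intro Z χ h1 h2 h3 h4
    obtain ⟨k, hk1, hk2⟩ := hext Z χ h2 h3 h4
    obtain ⟨k', hk', _⟩ := hg.univ Z k h1 hk1
    exact ⟨_, hom_comp (f := e.symm) he' hk'⟩
  · have : (e ∘ g) ∘ φ = ψ := funext (hom_unique hM.acc hM' hf hψ')
    rw [this]; exact hψ
  · intro x
    obtain ⟨y, rfl⟩ := e.surjective x
    obtain ⟨z, rfl⟩ := hg.quot.surj y
    rcases hst z with ⟨m, rfl⟩ | ⟨w1, w2, h1, h2, h3, h4⟩
    · exact Or.inl ⟨m, rfl⟩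
    · exact Or.inr ⟨w1, w2, h1, h2, h3, path_map hk h4⟩

lemma istep_spec {M N : Autom A} (hM : Nice M) {r s : M.Q} (h : M.IStep r s N) :
    ∃ f, M.IsHom N f ∧ FinKer f ∧ f r = f s ∧
      ∀ (Z : Autom A) (χ : M.Q → Z.Q), Z.Deterministic → M.IsHom Z χ → χ r = χ s →
        ∃ g : N.Q → Z.Q, N.IsHom Z g := by
  obtain ⟨hrs, X, Y, hX, hY, e, he, he'⟩ := h
  obtain ⟨f, hf, hff, hk⟩ := ident_quot hX
  obtain ⟨hYd, g, hg⟩ := reduction_fold (hf.deg hM.deg) (hf.acc hM.acc) hY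
  have hfrs : f r = f s := (hk r s).2 (Or.inr (Or.inl ⟨rfl, rfl⟩))
  refine ⟨e ∘ (g ∘ f), hom_comp (g := e) (hom_comp hf.hom hg.quot.hom) he,
    finKer_comp (finKer_comp hff hg.fin) (finKer_of_injective e.injective), by simp [hfrs], ?_⟩
  intro Z χ h1 h2 h3
  obtain ⟨k, hk1, hk2⟩ := hf.factor h2 (by
    intro x y h
    rcases (hk x y).1 h with rfl | ⟨rfl, rfl⟩ | ⟨rfl, rfl⟩
    · rfl
    · exact h3
    · exact h3.symm)
  obtain ⟨k', hk', _⟩ := hg.univ Z k h1 hk1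
  exact ⟨_, hom_comp (f := e.symm) he' hk'⟩

/-- Splitting a path in a deterministic automaton. -/
lemma path_split {M : Autom A} (hM : M.Deterministic) {x y z : M.Q} {u v : List (Ltr A)}
    (h : M.Path x u z) (h' : M.Path x (u ++ v) y) : M.Path z v y := by
  obtain ⟨t, h1, h2⟩ := path_append.1 h'
  rwa [path_det hM h h1]

section Main

variable {M M' N : Autom A} {p q : M.Q} {w : List (Ltr A)} {r s : M'.Q}
  {f : M.Q → M'.Q} {h : M'.Q → N.Q}

/-- One state in `M`, the other on the new path. -/
lemma case_mixed (hM : Nice M) (hM' : Nice M') (hN : N.Deterministic) (hNd : N.Dual)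
    (hNa : Acc N) (hw : IsReducedWord w) (hL : Least M p w q M' f)
    (hh : M'.IsHom N h) (hfin : FinKer (h ∘ f)) (hrs : h r = h s)
    (huniv : ∀ (Z : Autom A) (χ : M'.Q → Z.Q), Z.Deterministic → M'.IsHom Z χ → χ r = χ s →
        ∃ g : N.Q → Z.Q, N.IsHom Z g) (hno : ¬ ∃ g, N.IsHom M g)
    {m : M.Q} (hr : f m = r) {w1 w2 : List (Ltr A)} (hw12 : w = w1 ++ w2) (hw2 : w2 ≠ [])
    (hs : M'.Path (f p) w1 s) :
    (∃ c, StepCost M N c ∧ costLT [c] [w.length, 0]) ∨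
    (∃ (M'' : Autom A) (c₁ c₂ : ℕ), StepCost M M'' c₁ ∧ StepCost M'' N c₂ ∧
      costLT [c₁, c₂] [w.length, 0]) := by
  subst hr hw12
  have hhf := hom_comp hL.hom hh
  have hpath : N.Path ((h ∘ f) p) w1 ((h ∘ f) m) := by
    simp only [comp_apply, hrs]; exact path_map hh hs
  obtain ⟨M'', f'', hM'', hL'', hr'', -, -⟩ :=
    exists_least hM p w1 m (red_left hw) hN hNd hhf hfin hpath
  obtain ⟨g, hg⟩ := hL''.univ N _ hN hNd hhf hpath
  have hgf : g ∘ f'' = h ∘ f := funext (hom_unique hM.acc hN (hom_comp hL''.hom hg) hhf)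
  have hgf' : ∀ x, g (f'' x) = h (f x) := fun x => congrFun hgf x
  have hLN : Least M'' (f'' m) w2 (f'' q) N g := by
    refine ⟨hg, ?_, ?_⟩
    · rw [hgf', hgf', hrs]
      exact path_map hh (path_split hM'.det hs hL.path)
    · intro Z χ h1 h2 h3 h4
      have h5 := path_map h3 hL''.path
      have h6 := hom_comp hL''.hom h3
      obtain ⟨k, hk⟩ := hL.univ Z _ h1 h2 h6 (path_append.2 ⟨_, h5, h4⟩)
      have hkf : ∀ x, k (f x) = χ (f'' x) := hom_unique hM.acc h1 (hom_comp hL.hom hk) h6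
      refine huniv Z k h1 hk ?_
      have h7 := path_map hk hs
      rw [hkf] at h7
      rw [hkf, path_det h1 h7 h5]
  have hpos : 0 < w2.length := List.length_pos_iff.2 hw2
  exact two_steps hM hM'' hN hNd hNa hL'' hLN (red_left hw) (red_right hw) (hgf ▸ hfin)
    (finKer_right hr'' (hgf ▸ hfin)) (by simp) (by simp; omega) hno

/-- Both states in `M`. -/
lemma case_old (hM : Nice M) (hN : N.Deterministic) (hNd : N.Dual)
    (hNa : Acc N) (hw : IsReducedWord w) (hw0 : w ≠ []) (hL : Least M p w q M' f)
    (hh : M'.IsHom N h) (hfin : FinKer (h ∘ f)) (hrs : h r = h s)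
    (huniv : ∀ (Z : Autom A) (χ : M'.Q → Z.Q), Z.Deterministic → M'.IsHom Z χ → χ r = χ s →
        ∃ g : N.Q → Z.Q, N.IsHom Z g) (hno : ¬ ∃ g, N.IsHom M g)
    {m m' : M.Q} (hr : f m = r) (hs : f m' = s) :
    (∃ c, StepCost M N c ∧ costLT [c] [w.length, 0]) ∨
    (∃ (M'' : Autom A) (c₁ c₂ : ℕ), StepCost M M'' c₁ ∧ StepCost M'' N c₂ ∧
      costLT [c₁, c₂] [w.length, 0]) := by
  subst hr hs
  have hhf := hom_comp hL.hom hh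
  have hpath : N.Path ((h ∘ f) m) [] ((h ∘ f) m') := path_nil.2 hrs
  obtain ⟨M'', f'', hM'', hL'', hr'', -, -⟩ :=
    exists_least hM m [] m' red_nil hN hNd hhf hfin hpath
  obtain ⟨g, hg⟩ := hL''.univ N _ hN hNd hhf hpath
  have hgf : g ∘ f'' = h ∘ f := funext (hom_unique hM.acc hN (hom_comp hL''.hom hg) hhf)
  have hgf' : ∀ x, g (f'' x) = h (f x) := fun x => congrFun hgf x
  have hLN : Least M'' (f'' p) w (f'' q) N g := by
    refine ⟨hg, ?_, ?_⟩
    · rw [hgf', hgf']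
      exact path_map hh hL.path
    · intro Z χ h1 h2 h3 h4
      have h6 := hom_comp hL''.hom h3
      obtain ⟨k, hk⟩ := hL.univ Z _ h1 h2 h6 h4
      have hkf : ∀ x, k (f x) = χ (f'' x) := hom_unique hM.acc h1 (hom_comp hL.hom hk) h6
      refine huniv Z k h1 hk ?_
      rw [hkf, hkf, path_nil.1 hL''.path]
  have hpos : 0 < w.length := List.length_pos_iff.2 hw0
  exact two_steps hM hM'' hN hNd hNa hL'' hLN red_nil hw (hgf ▸ hfin)
    (finKer_right hr'' (hgf ▸ hfin)) (by simp) hpos hno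

/-- Both states on the new path. -/
lemma case_new (hM : Nice M) (hM' : Nice M') (hN : N.Deterministic) (hNd : N.Dual)
    (hNa : Acc N) (hw : IsReducedWord w) (hL : Least M p w q M' f)
    (hh : M'.IsHom N h) (hfin : FinKer (h ∘ f)) (hrs : h r = h s)
    (huniv : ∀ (Z : Autom A) (χ : M'.Q → Z.Q), Z.Deterministic → M'.IsHom Z χ → χ r = χ s →
        ∃ g : N.Q → Z.Q, N.IsHom Z g) (hno : ¬ ∃ g, N.IsHom M g)
    {w1 u w3 : List (Ltr A)} (hw12 : w = w1 ++ (u ++ w3)) (hu : u ≠ [])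
    (hr : M'.Path (f p) w1 r) (hs : M'.Path (f p) (w1 ++ u) s) :
    (∃ c, StepCost M N c ∧ costLT [c] [w.length, 0]) ∨
    (∃ (M'' : Autom A) (c₁ c₂ : ℕ), StepCost M M'' c₁ ∧ StepCost M'' N c₂ ∧
      costLT [c₁, c₂] [w.length, 0]) := by
  subst hw12
  have hhf := hom_comp hL.hom hh
  obtain ⟨x1, v, x3, rfl, rfl, hred⟩ := cancel w1 w3 (red_left hw) (red_right (red_right hw))
  have e1 := path_map hh hr
  have e2 : N.Path (h r) u (h r) := by
    have := path_map hh (path_split hM'.det hr hs)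
    rwa [← hrs] at this
  have e3 : N.Path (h r) (wordInv v ++ x3) (h (f q)) := by
    have h1 := hL.path
    rw [← List.append_assoc] at h1
    rw [hrs]
    exact path_map hh (path_split hM'.det hs h1)
  obtain ⟨t, ht1, ht2⟩ := path_append.1 e1
  have e4 : N.Path t x3 (h (f q)) := path_split hN (path_inv hNd ht2) e3
  have hpath : N.Path ((h ∘ f) p) (x1 ++ x3) ((h ∘ f) q) := path_append.2 ⟨t, ht1, e4⟩
  obtain ⟨M'', f'', hM'', hL'', hr'', -, -⟩ :=
    exists_least hM p (x1 ++ x3) q hred hN hNd hhf hfin hpath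
  obtain ⟨g, hg⟩ := hL''.univ N _ hN hNd hhf hpath
  have hgf : g ∘ f'' = h ∘ f := funext (hom_unique hM.acc hN (hom_comp hL''.hom hg) hhf)
  have hgf' : ∀ x, g (f'' x) = h (f x) := fun x => congrFun hgf x
  obtain ⟨t', ht1', ht2'⟩ := path_append.1 hL''.path
  have hgt : g t' = t := by
    have := path_map hg ht1'
    rw [hgf'] at this
    exact path_det hN this ht1
  have hLN : Least M'' t' (v ++ (u ++ wordInv v)) t' N g := by
    refine ⟨hg, ?_, ?_⟩
    · rw [hgt, path_append]
      exact ⟨_, ht2, path_append.2 ⟨_, e2, path_inv hNd ht2⟩⟩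
    · intro Z χ h1 h2 h3 h4
      obtain ⟨y, hy1, h5⟩ := path_append.1 h4
      obtain ⟨y', hy2, hy3⟩ := path_append.1 h5
      obtain rfl : y = y' := path_det h1 hy1 ((path_inv_iff h2).1 hy3)
      have h6 := hom_comp hL''.hom h3
      have a1 := path_map h3 ht1'
      have a3 := path_map h3 ht2'
      have b1 : Z.Path (χ (f'' p)) (x1 ++ v) y := path_append.2 ⟨_, a1, hy1⟩
      have b2 : Z.Path (χ (f'' p)) ((x1 ++ v) ++ u) y := path_append.2 ⟨_, b1, hy2⟩
      have b3 : Z.Path y (wordInv v ++ x3) (χ (f'' q)) := path_append.2 ⟨_, hy3, a3⟩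
      obtain ⟨k, hk⟩ := hL.univ Z _ h1 h2 h6
        (path_append.2 ⟨_, b1, path_append.2 ⟨_, hy2, b3⟩⟩)
      have hkf : ∀ x, k (f x) = χ (f'' x) := hom_unique hM.acc h1 (hom_comp hL.hom hk) h6
      refine huniv Z k h1 hk ?_
      have c1 := path_map hk hr
      have c2 := path_map hk hs
      rw [hkf] at c1 c2
      rw [path_det h1 c1 b1, path_det h1 c2 b2]
  have hpos : 0 < u.length := List.length_pos_iff.2 hu
  have hw2 : IsReducedWord (v ++ (u ++ wordInv v)) := by
    apply red_mid hu
    · have : (x1 ++ v) ++ (u ++ (wordInv v ++ x3)) = x1 ++ ((v ++ u) ++ (wordInv v ++ x3)) := by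
        simp
      rw [this] at hw
      exact red_left (red_right hw)
    · have : (x1 ++ v) ++ (u ++ (wordInv v ++ x3)) = (x1 ++ v) ++ ((u ++ wordInv v) ++ x3) := by
        simp
      rw [this] at hw
      exact red_left (red_right hw)
  exact two_steps hM hM'' hN hNd hNa hL'' hLN hred hw2 (hgf ▸ hfin)
    (finKer_right hr'' (hgf ▸ hfin)) (by simp [wordInv_length]; omega)
    (by simp [wordInv_length]; omega) hno

end Main

end ReStepAux

open ReStepAux

/-- Proposition 2.6: a reduced expansion followed by an i-step can be replaced by a
sequence of one or two steps (i-steps or reduced expansions) of strictly smaller cost. -/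
theorem restep_istep_commute
    {A : Type} (M M' N : Autom A)
    (hMinv : M.IsInv) (hMred : M.IsRed) (hM'inv : M'.IsInv) (hM'red : M'.IsRed)
    (hNinv : N.IsInv) (hNred : N.IsRed)
    (p : M.Q) (w : List (Ltr A)) (q : M.Q) (hwred : IsReducedWord w)
    (h1 : M.REStep p w q M') (r s : M'.Q) (h2 : M'.IStep r s N) :
    (∃ c, StepCost M N c ∧ costLT [c] [w.length, 0]) ∨
    (∃ (M'' : Autom A) (c₁ c₂ : ℕ), StepCost M M'' c₁ ∧ StepCost M'' N c₂ ∧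
      costLT [c₁, c₂] [w.length, 0]) := by


  have hM := nice_of hMinv hMred
  have hM' := nice_of hM'inv hM'red
  have hN := nice_of hNinv hNred
  obtain ⟨f, hL, hf, hst⟩ := restep_spec hM hM'.det hwred h1
  obtain ⟨h, hh, hfinh, hrs, huniv⟩ := istep_spec hM' h2
  have hne : r ≠ s := h2.1
  have hw0 : w ≠ [] := by
    obtain ⟨⟨X, _, hX, _⟩, _⟩ := h1
    exact hX.1
  have hfin : FinKer (h ∘ f) := finKer_comp (finKer_of_injective hf) hfinh
  have hno : ¬ ∃ g, N.IsHom M g := by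
    rintro ⟨g, hg⟩
    have key := hom_unique hM'.acc hM'.det (hom_comp (hom_comp hh hg) hL.hom) (hom_id M')
    apply hne
    have hr := key r
    have hs := key s
    simp only [comp_apply, id] at hr hs
    rw [← hr, ← hs, hrs]
  have huniv' : ∀ (Z : Autom A) (χ : M'.Q → Z.Q), Z.Deterministic → M'.IsHom Z χ →
      χ s = χ r → ∃ g : N.Q → Z.Q, N.IsHom Z g :=
    fun Z χ a b c => huniv Z χ a b c.symm
  rcases hst r with ⟨m, hr⟩ | ⟨w1, w2, hw12, hw1, hw2, hr⟩
  · rcases hst s with ⟨m', hs⟩ | ⟨w1, w2, hw12, hw1, hw2, hs⟩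
    · exact case_old hM hN.det hN.dual hN.acc hwred hw0 hL hh hfin hrs huniv hno hr hs
    · exact case_mixed hM hM' hN.det hN.dual hN.acc hwred hL hh hfin hrs huniv hno hr hw12
        hw2 hs
  · rcases hst s with ⟨m', hs⟩ | ⟨w1', w2', hw12', hw1', hw2', hs⟩
    · exact case_mixed hM hM' hN.det hN.dual hN.acc hwred hL hh hfin hrs.symm huniv' hno hs
        hw12 hw2 hr
    · have heq : w1 ++ w2 = w1' ++ w2' := by rw [← hw12, ← hw12']
      rcases List.append_eq_append_iff.1 heq with ⟨u, h3, h4⟩ | ⟨u, h3, h4⟩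
      · subst h3
        have hu : u ≠ [] := by
          rintro rfl
          rw [List.append_nil] at hs
          exact hne (path_det hM'.det hr hs)
        exact case_new hM hM' hN.det hN.dual hN.acc hwred hL hh hfin hrs huniv hno
          (hw12.trans (by rw [h4])) hu hr hs
      · subst h3
        have hu : u ≠ [] := by
          rintro rfl
          rw [List.append_nil] at hr
          exact hne (path_det hM'.det hr hs)
        exact case_new hM hM' hN.det hN.dual hN.acc hwred hL hh hfin hrs.symm huniv' hno
          (hw12'.trans (by rw [h4])) hu hs hr
end
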